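/- arXiv:1506.06545 — 2 statements merged into one kernel-verified Lean document; each statement's English description precedes it below -/
import Mathlib

section
/- Let n₀,n₁,n₂,n₃ ∈ ℂ and let p(τ), A(τ) be holomorphic functions on an open connected subset V ⊆ ℍ with 2p(τ) ∉ Λ_τ and p(τ) + ω_k/2 ∉ Λ_τ for all k and τ ∈ V, and let B(τ) = A² − ζ(2p|τ)A − (3/4)℘(2p|τ) − Σ_k n_k(n_k+1)℘(p + ω_k/2|τ). Define Ω(z;τ) = (−i/(4π))(ζ(z−p|τ) + ζ(z+p|τ) − 2zη₁(τ)) and U(z;τ) = ∂³Ω/∂z³ − 4I(z;τ)∂Ω/∂z − 2(∂I/∂z)Ω + 2∂I/∂τ. Then U(z;τ) = 0 for all τ ∈ V and all z outside the singular set if and only if (p(τ), A(τ)) satisfies the Hamiltonian system on V. -/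
open Complex Filter Topology Asymptotics

noncomputable section

/-- membership in the lattice `Λ_τ = ℤ + τℤ`. -/
def InLattice (τ z : ℂ) : Prop := ∃ m n : ℤ, z = (m : ℂ) + (n : ℂ) * τ

/-- the half-period generators `ω₀ = 0, ω₁ = 1, ω₂ = τ, ω₃ = 1 + τ`. -/
def halfp (τ : ℂ) : Fin 4 → ℂ := ![0, 1, τ, 1 + τ]

/-- the Weierstrass elliptic function `℘(z|τ)`. -/
def wp (τ z : ℂ) : ℂ :=
  z⁻¹ ^ 2 + ∑' w : {w : ℤ × ℤ // w ≠ 0},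
    ((z - ((w.1.1 : ℂ) + (w.1.2 : ℂ) * τ))⁻¹ ^ 2 - ((w.1.1 : ℂ) + (w.1.2 : ℂ) * τ)⁻¹ ^ 2)

/-- `℘′(z|τ)`, the `z`-derivative of `℘`. -/
def wpd (τ z : ℂ) : ℂ := deriv (wp τ) z

/-- `℘″(z|τ)`. -/
def wpdd (τ z : ℂ) : ℂ := deriv (wpd τ) z

def e1 (τ : ℂ) : ℂ := wp τ (1 / 2)
def e2 (τ : ℂ) : ℂ := wp τ (τ / 2)
def e3 (τ : ℂ) : ℂ := wp τ ((1 + τ) / 2)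

def g2 (τ : ℂ) : ℂ := -4 * (e1 τ * e2 τ + e1 τ * e3 τ + e2 τ * e3 τ)

/-- `zeta` is the Weierstrass zeta function: for each `τ ∈ ℍ`, `zeta τ` is odd, satisfies
`∂ζ/∂z = -℘` off the lattice, and `ζ(z|τ) - 1/z → 0` as `z → 0`. -/
def IsWeierstrassZeta (zeta : ℂ → ℂ → ℂ) : Prop :=
  ∀ τ : ℂ, 0 < τ.im →
    (∀ z : ℂ, zeta τ (-z) = - zeta τ z) ∧
    (∀ z : ℂ, ¬ InLattice τ z → HasDerivAt (zeta τ) (- wp τ z) z) ∧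
    Tendsto (fun z => zeta τ z - z⁻¹) (𝓝[≠] (0 : ℂ)) (𝓝 0)

/-- `eta1 τ = ζ(z+1|τ) - ζ(z|τ)` is the first quasi-period. -/
def IsEta1 (zeta : ℂ → ℂ → ℂ) (eta1 : ℂ → ℂ) : Prop :=
  ∀ τ : ℂ, 0 < τ.im → ∀ z : ℂ, ¬ InLattice τ z →
    eta1 τ = zeta τ (z + 1) - zeta τ z

/-- `eta2 τ = ζ(z+τ|τ) - ζ(z|τ)` is the second quasi-period. -/
def IsEta2 (zeta : ℂ → ℂ → ℂ) (eta2 : ℂ → ℂ) : Prop :=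
  ∀ τ : ℂ, 0 < τ.im → ∀ z : ℂ, ¬ InLattice τ z →
    eta2 τ = zeta τ (z + τ) - zeta τ z

/-- `sigma` is the Weierstrass sigma function: entire, odd, with
`∂/∂z log σ = ζ` off the lattice and `σ(z|τ)/z → 1` as `z → 0`. -/
def IsWeierstrassSigma (zeta sigma : ℂ → ℂ → ℂ) : Prop :=
  ∀ τ : ℂ, 0 < τ.im →
    (∀ z : ℂ, sigma τ (-z) = - sigma τ z) ∧
    Differentiable ℂ (sigma τ) ∧
    (∀ z : ℂ, ¬ InLattice τ z → HasDerivAt (sigma τ) (zeta τ z * sigma τ z) z) ∧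
    Tendsto (fun z => sigma τ z / z) (𝓝[≠] (0 : ℂ)) (𝓝 1)

/-- the Hamiltonian system (142) for `(p(τ), A(τ))` on `V`. -/
def HamSystem (n : Fin 4 → ℂ) (zeta : ℂ → ℂ → ℂ) (eta1 : ℂ → ℂ)
    (V : Set ℂ) (p A : ℂ → ℂ) : Prop :=
  ∀ τ ∈ V,
    HasDerivAt p ((-Complex.I / (4 * (Real.pi : ℂ))) *
      (2 * A τ - zeta τ (2 * p τ) + 2 * p τ * eta1 τ)) τ ∧
    HasDerivAt A ((Complex.I / (4 * (Real.pi : ℂ))) *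
      ((2 * wp τ (2 * p τ) + 2 * eta1 τ) * A τ - (3 / 2) * wpd τ (2 * p τ)
        - ∑ k : Fin 4, n k * (n k + 1) * wpd τ (p τ + halfp τ k / 2))) τ

/-- the generalized Lamé potential `I(z;τ)`. -/
def Ipot (n : Fin 4 → ℂ) (zeta : ℂ → ℂ → ℂ) (A B p τ z : ℂ) : ℂ :=
  (∑ k : Fin 4, n k * (n k + 1) * wp τ (z + halfp τ k / 2))
    + (3 / 4) * (wp τ (z + p) + wp τ (z - p))
    + A * (zeta τ (z + p) - zeta τ (z - p)) + B

end

theorem hasFDerivAt_tsum_of_summable_norm {ι E F : Type*} [NormedAddCommGroup E] [NormedSpace ℂ E]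
    [NormedAddCommGroup F] [NormedSpace ℂ F] [CompleteSpace F] {f : ι → E → F} {u : ι → ℝ}
    {c : E} {R : ℝ} (hu : Summable u) (hf : ∀ i, DifferentiableOn ℂ (f i) (Metric.ball c R))
    (hb : ∀ i, ∀ x ∈ Metric.ball c R, ‖f i x‖ ≤ u i) {r : ℝ} (hr : r < R) :
    (∀ i, ∀ x ∈ Metric.ball c r, ‖fderiv ℂ (f i) x‖ ≤ 2 * u i / (R - r)) ∧
    ∀ x ∈ Metric.ball c r,
      HasFDerivAt (fun y => ∑' i, f i y) (∑' i, fderiv ℂ (f i) x) x := by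
  have hsub : ∀ x ∈ Metric.ball c r, Metric.ball x (R - r) ⊆ Metric.ball c R := by
    intro x hx
    apply Metric.ball_subset_ball'
    rw [Metric.mem_ball] at hx
    linarith
  have hmem : ∀ x ∈ Metric.ball c r, x ∈ Metric.ball c R := fun x hx =>
    Metric.ball_subset_ball hr.le hx
  have hbd : ∀ i, ∀ x ∈ Metric.ball c r, ‖fderiv ℂ (f i) x‖ ≤ 2 * u i / (R - r) := by
    intro i x hx
    refine norm_fderiv_le_div_of_mapsTo_ball ((hf i).mono (hsub x hx)) ?_ (by linarith)
    intro y hy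
    rw [Metric.mem_closedBall, dist_eq_norm]
    have h1 := hb i y (hsub x hx hy)
    have h2 := hb i x (hmem x hx)
    have h3 := norm_sub_le (f i y) (f i x)
    linarith
  refine ⟨hbd, fun x hx => ?_⟩
  refine hasFDerivAt_tsum_of_isPreconnected (u := fun i => 2 * u i / (R - r))
    ((hu.mul_left 2).div_const _) Metric.isOpen_ball (convex_ball c r).isPreconnected
    (fun i y hy => ?_) hbd hx ?_ hx
  · exact ((hf i).differentiableAt (Metric.isOpen_ball.mem_nhds (hmem y hy))).hasFDerivAt
  · exact Summable.of_norm_bounded hu fun i => hb i x (hmem x hx)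

theorem contDiffOn_tsum_of_summable_norm {ι : Type*} {E : Type} [NormedAddCommGroup E]
    [NormedSpace ℂ E] {c : E} (n : ℕ) :
    ∀ {F : Type} [NormedAddCommGroup F] [NormedSpace ℂ F] [CompleteSpace F] {f : ι → E → F}
    {u : ι → ℝ} {R : ℝ}, Summable u → (∀ i, AnalyticOnNhd ℂ (f i) (Metric.ball c R)) →
    (∀ i, ∀ x ∈ Metric.ball c R, ‖f i x‖ ≤ u i) → ∀ {r : ℝ}, r < R →
    ContDiffOn ℂ n (fun y => ∑' i, f i y) (Metric.ball c r) := by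
  induction n with
  | zero =>
    intro F _ _ _ f u R hu hf hb r hr
    have h := (hasFDerivAt_tsum_of_summable_norm hu (fun i => (hf i).differentiableOn) hb hr).2
    exact contDiffOn_zero.2 fun x hx => (h x hx).continuousAt.continuousWithinAt
  | succ n ih =>
    intro F _ _ _ f u R hu hf hb r hr
    obtain ⟨s, hrs, hsR⟩ := exists_between hr
    have h := hasFDerivAt_tsum_of_summable_norm hu (fun i => (hf i).differentiableOn) hb hsR
    have hsub : Metric.ball c r ⊆ Metric.ball c s := Metric.ball_subset_ball hrs.le
    rw [Nat.cast_add, Nat.cast_one, contDiffOn_succ_iff_fderiv_of_isOpen Metric.isOpen_ball]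
    refine ⟨fun x hx => (h.2 x (hsub hx)).differentiableAt.differentiableWithinAt, by simp, ?_⟩
    have := ih (u := fun i => 2 * u i / (R - s)) ((hu.mul_left 2).div_const _)
      (fun i => ((hf i).mono (Metric.ball_subset_ball hsR.le)).fderiv) h.1 hrs
    exact this.congr fun x hx => (h.2 x (hsub hx)).fderiv

theorem contDiffAt_tsum_of_eventually_norm_le {ι : Type*} {E F : Type} [NormedAddCommGroup E]
    [NormedSpace ℂ E] [NormedAddCommGroup F] [NormedSpace ℂ F] [CompleteSpace F]
    {f : ι → E → F} {u : ι → ℝ} {c : E}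
    (hu : Summable u) (hf : ∀ i, AnalyticAt ℂ (f i) c)
    {R : ℝ} (hR : 0 < R) {T : Set ι} (hT : T.Finite)
    (han : ∀ i ∉ T, AnalyticOnNhd ℂ (f i) (Metric.ball c R))
    (hb : ∀ i ∉ T, ∀ x ∈ Metric.ball c R, ‖f i x‖ ≤ u i) (n : ℕ) :
    ContDiffAt ℂ n (fun y => ∑' i, f i y) c ∧ ∀ᶠ x in 𝓝 c,
      HasFDerivAt (fun y => ∑' i, f i y) (∑' i, fderiv ℂ (f i) x) x ∧
      Summable (fun i => fderiv ℂ (f i) x) := by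
  classical
  have h1 : ∀ᶠ x in 𝓝 c, ∀ i ∈ T, AnalyticAt ℂ (f i) x ∧ ‖f i x‖ ≤ ‖f i c‖ + 1 := by
    rw [eventually_all_finite hT]
    intro i _
    have h2 : ∀ᶠ x in 𝓝 c, ‖f i x‖ < ‖f i c‖ + 1 :=
      (hf i).continuousAt.norm.eventually_lt_const (by linarith)
    filter_upwards [(hf i).eventually_analyticAt, h2] with x hx hx'
    exact ⟨hx, hx'.le⟩
  obtain ⟨ε, hε, hball⟩ := Metric.eventually_nhds_iff_ball.1 h1
  set S := min ε R
  have hS : 0 < S := lt_min hε hR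
  set v : ι → ℝ := fun i => if i ∈ T then ‖f i c‖ + 1 else u i
  have hv : Summable v := by
    rw [← summable_congr_cofinite (f := u)]
    · exact hu
    · have : ∀ᶠ i in cofinite, i ∉ T := hT.compl_mem_cofinite
      filter_upwards [this] with i hi
      simp [v, hi]
  have han' : ∀ i, AnalyticOnNhd ℂ (f i) (Metric.ball c S) := by
    intro i x hx
    by_cases hi : i ∈ T
    · exact (hball x (Metric.ball_subset_ball (min_le_left _ _) hx) i hi).1
    · exact han i hi x (Metric.ball_subset_ball (min_le_right _ _) hx)
  have hb' : ∀ i, ∀ x ∈ Metric.ball c S, ‖f i x‖ ≤ v i := by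
    intro i x hx
    by_cases hi : i ∈ T
    · simpa [v, hi] using (hball x (Metric.ball_subset_ball (min_le_left _ _) hx) i hi).2
    · simpa [v, hi] using hb i hi x (Metric.ball_subset_ball (min_le_right _ _) hx)
  have hS2 : S / 2 < S := by linarith
  have hnhds : Metric.ball c (S / 2) ∈ 𝓝 c := Metric.ball_mem_nhds _ (by linarith)
  refine ⟨(contDiffOn_tsum_of_summable_norm n hv han' hb' hS2).contDiffAt hnhds, ?_⟩
  have h := hasFDerivAt_tsum_of_summable_norm hv (fun i => (han' i).differentiableOn) hb' hS2
  filter_upwards [hnhds] with x hx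
  exact ⟨h.2 x hx, Summable.of_norm_bounded ((hv.mul_left 2).div_const _) fun i => h.1 i x hx⟩

noncomputable section

/-- nonzero index pairs of the lattice `ℤ + τℤ`. -/
abbrev LatticeIndex : Type := {w : ℤ × ℤ // w ≠ 0}

/-- the lattice point `m + nτ` with index `(m, n)`. -/
def latticePoint (τ : ℂ) (w : LatticeIndex) : ℂ := (w.1.1 : ℂ) + (w.1.2 : ℂ) * τ

/-- the sup norm of an index pair. -/
def indexSize (w : LatticeIndex) : ℝ := ‖(![w.1.2, w.1.1] : Fin 2 → ℤ)‖

theorem indexVector_injective :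
    Function.Injective (fun w : LatticeIndex => (![w.1.2, w.1.1] : Fin 2 → ℤ)) := by
  intro v w h
  have h0 := congrFun h 0
  have h1 := congrFun h 1
  simp only [Matrix.cons_val_zero, Matrix.cons_val_one] at h0 h1
  exact Subtype.ext (Prod.ext h1 h0)

theorem indexVector_ne_zero (w : LatticeIndex) : (![w.1.2, w.1.1] : Fin 2 → ℤ) ≠ 0 := by
  intro h
  have h0 := congrFun h 0
  have h1 := congrFun h 1
  simp only [Matrix.cons_val_zero, Matrix.cons_val_one, Pi.zero_apply] at h0 h1
  exact w.2 (Prod.ext h1 h0)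

theorem indexSize_pos (w : LatticeIndex) : 0 < indexSize w :=
  norm_pos_iff.2 (indexVector_ne_zero w)

theorem summable_indexSize_rpow : Summable fun w : LatticeIndex => indexSize w ^ (-3 : ℝ) :=
  (EisensteinSeries.summable_one_div_norm_rpow (k := 3) (by norm_num)).comp_injective
    indexVector_injective

theorem finite_indexSize_le (N : ℝ) : {w : LatticeIndex | indexSize w ≤ N}.Finite := by
  have h : (Metric.closedBall (0 : Fin 2 → ℤ) N).Finite :=
    isCompact_iff_finite.1 (isCompact_closedBall _ _)
  refine (h.preimage indexVector_injective.injOn).subset ?_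
  intro w hw
  simpa [indexSize] using hw

theorem exists_indexSize_le_norm {τ : ℂ} (hτ : 0 < τ.im) :
    ∃ δ > 0, ∃ ρ > 0, ∀ t ∈ Metric.ball τ δ, 0 < t.im ∧
      ∀ w : LatticeIndex, ρ * indexSize w ≤ ‖latticePoint t w‖ := by
  have hB : 0 < τ.im / 2 := by linarith
  refine ⟨min 1 (τ.im / 2), lt_min one_pos hB, EisensteinSeries.r ⟨⟨|τ.re| + 1, τ.im / 2⟩, hB⟩,
    EisensteinSeries.r_pos _, fun t ht => ?_⟩
  rw [Metric.mem_ball, dist_eq_norm, lt_min_iff] at ht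
  have hre := (abs_re_le_norm (t - τ)).trans_lt ht.1
  have him := (abs_im_le_norm (t - τ)).trans_lt ht.2
  rw [sub_re] at hre
  rw [sub_im, abs_lt] at him
  have ht' : τ.im / 2 ≤ t.im := by linarith
  have htp : 0 < t.im := by linarith
  refine ⟨htp, fun w => ?_⟩
  have hs : (⟨t, htp⟩ : UpperHalfPlane) ∈ UpperHalfPlane.verticalStrip (|τ.re| + 1) (τ.im / 2) := by
    rw [UpperHalfPlane.mem_verticalStrip_iff]
    refine ⟨?_, ht'⟩
    have h3 : |t.re| ≤ |t.re - τ.re| + |τ.re| := by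
      simpa using abs_add_le (t.re - τ.re) τ.re
    change |t.re| ≤ _
    linarith
  have h1 := EisensteinSeries.r_lower_bound_on_verticalStrip _ hB hs
  have h2 := EisensteinSeries.r_mul_max_le ⟨t, htp⟩ (indexVector_ne_zero w)
  refine (mul_le_mul_of_nonneg_right h1 (indexSize_pos w).le).trans (h2.trans_eq ?_)
  simp only [latticePoint, Matrix.cons_val_zero, Matrix.cons_val_one, add_comm]

theorem latticePoint_ne_zero {τ : ℂ} (hτ : 0 < τ.im) (w : LatticeIndex) : latticePoint τ w ≠ 0 := by
  obtain ⟨δ, hδ, ρ, hρ, h⟩ := exists_indexSize_le_norm hτ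
  have h1 := (h τ (Metric.mem_ball_self hδ)).2 w
  have h2 := mul_pos hρ (indexSize_pos w)
  exact norm_pos_iff.1 (h2.trans_le h1)

/-- pairs `(τ, z)` with `τ ∈ ℍ` and `z` not a nonzero lattice point. -/
def OffPeriods (x : ℂ × ℂ) : Prop := 0 < x.1.im ∧ ∀ w : LatticeIndex, x.2 ≠ latticePoint x.1 w

theorem offPeriods_zero {τ : ℂ} (hτ : 0 < τ.im) : OffPeriods (τ, 0) :=
  ⟨hτ, fun w => (latticePoint_ne_zero hτ w).symm⟩

theorem offPeriods_of_not_inLattice {τ z : ℂ} (hτ : 0 < τ.im) (hz : ¬ InLattice τ z) :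
    OffPeriods (τ, z) :=
  ⟨hτ, fun w h => hz ⟨w.1.1, w.1.2, h⟩⟩

theorem not_inLattice_of_offPeriods {τ z : ℂ} (h : OffPeriods (τ, z)) (hz : z ≠ 0) :
    ¬ InLattice τ z := by
  rintro ⟨m, n, hmn⟩
  by_cases hw : ((m, n) : ℤ × ℤ) = 0
  · rw [Prod.mk_eq_zero] at hw
    exact hz (by simp [hmn, hw.1, hw.2])
  · exact h.2 ⟨(m, n), hw⟩ hmn

theorem exists_far_periods {c : ℂ × ℂ} (hc : 0 < c.1.im) :
    ∃ R > 0, ∃ T : Set LatticeIndex, T.Finite ∧ ∃ ρ > 0, ∃ M > 0, ∀ x ∈ Metric.ball c R,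
      0 < x.1.im ∧ ‖x.2‖ ≤ M ∧ ∀ w ∉ T, ρ * indexSize w ≤ ‖latticePoint x.1 w‖ ∧
        2 * M ≤ ‖latticePoint x.1 w‖ := by
  obtain ⟨δ, hδ, ρ, hρ, h⟩ := exists_indexSize_le_norm hc
  refine ⟨min δ 1, lt_min hδ one_pos, _, finite_indexSize_le (2 * (‖c.2‖ + 1) / ρ), ρ, hρ,
    ‖c.2‖ + 1, by positivity, fun x hx => ?_⟩
  rw [Metric.mem_ball, lt_min_iff] at hx
  have hx1 : x.1 ∈ Metric.ball c.1 δ := (le_max_left _ _).trans_lt hx.1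
  have hx2 : ‖x.2 - c.2‖ < 1 := by
    rw [← dist_eq_norm]
    exact (le_max_right _ _).trans_lt hx.2
  refine ⟨(h x.1 hx1).1, ?_, fun w hw => ?_⟩
  · have := norm_le_norm_add_norm_sub' x.2 c.2
    linarith
  · have h1 := (h x.1 hx1).2 w
    refine ⟨h1, le_trans ?_ h1⟩
    rw [Set.mem_ofPred_eq, not_le, div_lt_iff₀ hρ] at hw
    linarith

theorem eventually_offPeriods {c : ℂ × ℂ} (hc : OffPeriods c) : ∀ᶠ x in 𝓝 c, OffPeriods x := by
  obtain ⟨R, hR, T, hT, ρ, hρ, M, hM, h⟩ := exists_far_periods hc.1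
  have h1 : ∀ᶠ x in 𝓝 c, ∀ w ∈ T, x.2 ≠ latticePoint x.1 w := by
    rw [eventually_all_finite hT]
    intro w _
    have hl : ContinuousAt (fun x : ℂ × ℂ => latticePoint x.1 w) c := by
      unfold latticePoint
      fun_prop
    exact (continuousAt_snd.sub hl).eventually_ne (sub_ne_zero.2 (hc.2 w)) |>.mono
      fun x hx => sub_ne_zero.1 hx
  filter_upwards [h1, Metric.ball_mem_nhds c hR] with x hx hxb
  refine ⟨(h x hxb).1, fun w hw => ?_⟩
  by_cases hwT : w ∈ T
  · exact hx w hwT hw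
  · have h2 := ((h x hxb).2.2 w hwT).2
    have h3 := (h x hxb).2.1
    rw [← hw] at h2
    linarith

/-- a term of the series for `ζ(z|τ) - 1/z`. -/
def zetaTerm (w : LatticeIndex) (x : ℂ × ℂ) : ℂ :=
  (x.2 - latticePoint x.1 w)⁻¹ + (latticePoint x.1 w)⁻¹ + x.2 * (latticePoint x.1 w)⁻¹ ^ 2

/-- the regular part `ζ(z|τ) - 1/z` of the Weierstrass zeta function. -/
def zetaReg (x : ℂ × ℂ) : ℂ := ∑' w : LatticeIndex, zetaTerm w x

theorem analyticAt_zetaTerm {x : ℂ × ℂ} {w : LatticeIndex} (h0 : latticePoint x.1 w ≠ 0)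
    (hx : x.2 ≠ latticePoint x.1 w) : AnalyticAt ℂ (zetaTerm w) x := by
  have hl : AnalyticAt ℂ (fun x : ℂ × ℂ => latticePoint x.1 w) x :=
    analyticAt_const.add (analyticAt_const.mul analyticAt_fst)
  have hs : AnalyticAt ℂ (fun x : ℂ × ℂ => x.2) x := analyticAt_snd
  exact (((hs.sub hl).inv (sub_ne_zero.2 hx)).add (hl.inv h0)).add (hs.mul ((hl.inv h0).pow 2))

theorem norm_zetaTerm_le {x : ℂ × ℂ} {w : LatticeIndex} {ρ M : ℝ} (hρ : 0 < ρ) (hM : 0 < M)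
    (hx : ‖x.2‖ ≤ M) (h1 : ρ * indexSize w ≤ ‖latticePoint x.1 w‖)
    (h2 : 2 * M ≤ ‖latticePoint x.1 w‖) :
    ‖zetaTerm w x‖ ≤ 2 * M ^ 2 / ρ ^ 3 * indexSize w ^ (-3 : ℝ) := by
  set l := latticePoint x.1 w with hl
  have hs := indexSize_pos w
  have hlp : 0 < ‖l‖ := by linarith
  have hl0 : l ≠ 0 := norm_pos_iff.1 hlp
  have hd : ‖l‖ / 2 ≤ ‖x.2 - l‖ := by
    have := norm_sub_norm_le l x.2
    rw [norm_sub_rev] at this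
    linarith
  have hd0 : x.2 - l ≠ 0 := norm_pos_iff.1 (by linarith)
  have he : zetaTerm w x = x.2 ^ 2 / (l ^ 2 * (x.2 - l)) := by
    rw [zetaTerm, ← hl]
    field_simp
    ring
  have hr : indexSize w ^ (-3 : ℝ) = (indexSize w ^ 3)⁻¹ := by
    rw [Real.rpow_neg hs.le]
    norm_cast
  rw [he, norm_div, norm_mul, norm_pow, norm_pow, hr, ← div_eq_mul_inv, div_div, ← mul_pow]
  rw [div_le_div_iff₀ (by positivity) (by positivity)]
  have hA : (ρ * indexSize w) ^ 3 ≤ ‖l‖ ^ 3 := pow_le_pow_left₀ (by positivity) h1 3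
  have hB : ‖x.2‖ ^ 2 ≤ M ^ 2 := pow_le_pow_left₀ (norm_nonneg _) hx 2
  calc ‖x.2‖ ^ 2 * (ρ * indexSize w) ^ 3 ≤ M ^ 2 * ‖l‖ ^ 3 := by gcongr
    _ = 2 * M ^ 2 * (‖l‖ ^ 2 * (‖l‖ / 2)) := by ring
    _ ≤ _ := by gcongr

theorem contDiffAt_zetaReg_aux {c : ℂ × ℂ} (hc : OffPeriods c) (n : ℕ) :
    ContDiffAt ℂ n zetaReg c ∧ ∀ᶠ x in 𝓝 c,
      HasFDerivAt zetaReg (∑' w, fderiv ℂ (zetaTerm w) x) x ∧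
      Summable (fun w => fderiv ℂ (zetaTerm w) x) := by
  obtain ⟨R, hR, T, hT, ρ, hρ, M, hM, h⟩ := exists_far_periods hc.1
  refine contDiffAt_tsum_of_eventually_norm_le (u := fun w =>
    2 * M ^ 2 / ρ ^ 3 * indexSize w ^ (-3 : ℝ)) (summable_indexSize_rpow.mul_left _)
    (fun w => analyticAt_zetaTerm (latticePoint_ne_zero hc.1 w) (hc.2 w)) hR hT ?_ ?_ n
  · intro w hw x hx
    obtain ⟨hx1, hx2, hx3⟩ := h x hx
    refine analyticAt_zetaTerm (latticePoint_ne_zero hx1 w) fun he => ?_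
    have := (hx3 w hw).2
    rw [← he] at this
    linarith
  · intro w hw x hx
    obtain ⟨hx1, hx2, hx3⟩ := h x hx
    exact norm_zetaTerm_le hρ hM hx2 (hx3 w hw).1 (hx3 w hw).2

theorem contDiffAt_zetaReg {c : ℂ × ℂ} (hc : OffPeriods c) (n : ℕ) :
    ContDiffAt ℂ n zetaReg c :=
  (contDiffAt_zetaReg_aux hc n).1

theorem fderiv_zetaReg_apply {c : ℂ × ℂ} (hc : OffPeriods c) :
    fderiv ℂ zetaReg c (0, 1) = -(wp c.1 c.2 - c.2⁻¹ ^ 2) := by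
  obtain ⟨h1, h2⟩ := (contDiffAt_zetaReg_aux hc 0).2.self_of_nhds
  rw [h1.fderiv, wp, add_sub_cancel_left, ← tsum_neg]
  have := (ContinuousLinearMap.apply ℂ ℂ ((0 : ℂ), (1 : ℂ))).map_tsum h2
  simp only [ContinuousLinearMap.apply_apply] at this
  rw [this]
  refine tsum_congr fun w => ?_
  have hd := (analyticAt_zetaTerm (latticePoint_ne_zero hc.1 w) (hc.2 w)).differentiableAt
  have hcurve : HasDerivAt (fun z : ℂ => (c.1, z)) ((0 : ℂ), (1 : ℂ)) c.2 :=
    (hasDerivAt_const c.2 c.1).prodMk (hasDerivAt_id c.2)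
  have h3 := hd.hasFDerivAt.comp_hasDerivAt c.2 hcurve
  have h4 : HasDerivAt (fun z : ℂ => zetaTerm w (c.1, z))
      (-1 / (c.2 - latticePoint c.1 w) ^ 2 + 1 * (latticePoint c.1 w)⁻¹ ^ 2) c.2 := by
    exact ((((hasDerivAt_id' c.2).sub_const (latticePoint c.1 w)).fun_inv
      (sub_ne_zero.2 (hc.2 w))).add_const (latticePoint c.1 w)⁻¹).fun_add
      ((hasDerivAt_id' c.2).mul_const ((latticePoint c.1 w)⁻¹ ^ 2))
  rw [h3.unique h4, ← latticePoint]
  field_simp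
  ring

theorem zetaReg_zero {τ : ℂ} : zetaReg (τ, 0) = 0 := by
  simp [zetaReg, zetaTerm]

end

noncomputable section

/-- the period pair `(1, τ)`. -/
def standardPair (τ : ℂ) (hτ : 0 < τ.im) : PeriodPair where
  ω₁ := 1
  ω₂ := τ
  indep := by
    rw [LinearIndependent.pair_iff]
    intro s t h
    have him := congrArg Complex.im h
    have hre := congrArg Complex.re h
    simp only [real_smul, mul_one, add_im, ofReal_im, mul_im, ofReal_re, zero_mul, add_zero,
      zero_add, zero_im, mul_eq_zero, hτ.ne', or_false] at him
    simp only [him, real_smul, mul_one, ofReal_zero, zero_mul, add_zero, ofReal_re, zero_re] at hre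
    exact ⟨hre, him⟩

theorem mem_standardPair_lattice {τ z : ℂ} (hτ : 0 < τ.im) :
    z ∈ (standardPair τ hτ).lattice ↔ InLattice τ z := by
  rw [PeriodPair.mem_lattice, InLattice]
  simp only [standardPair, mul_one, eq_comm]

theorem wp_eq_weierstrassP {τ : ℂ} (hτ : 0 < τ.im) (z : ℂ) :
    wp τ z = (standardPair τ hτ).weierstrassP z := by
  set L := standardPair τ hτ
  have h1 := (L.latticeEquivProd.symm.toEquiv.hasSum_iff).2 (L.hasSum_weierstrassP z)
  have h2 := h1.summable.tsum_eq_add_tsum_ite (0 : ℤ × ℤ)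
  rw [h1.tsum_eq] at h2
  rw [h2, wp]
  congr 1
  · simp
  · rw [← tsum_subtype_eq_of_support_subset (s := {w : ℤ × ℤ | w ≠ 0})]
    · refine tsum_congr fun w => ?_
      have hw : w.1 ≠ 0 := w.2
      have hl : ((L.latticeEquivProd.symm w.1 : L.lattice) : ℂ) = w.1.1 + w.1.2 * τ := by
        rw [PeriodPair.latticeEquiv_symm_apply]
        simp [L, standardPair]
      simp only [hw, if_false, Function.comp_apply, LinearEquiv.coe_toEquiv, hl, one_div, inv_pow]
    · intro w hw h0
      exact hw (by simp [h0])

theorem wp_neg {τ : ℂ} (hτ : 0 < τ.im) (z : ℂ) : wp τ (-z) = wp τ z := by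
  simp only [wp_eq_weierstrassP hτ, PeriodPair.weierstrassP_neg]

theorem wp_add_of_inLattice {τ l : ℂ} (hτ : 0 < τ.im) (hl : InLattice τ l) (z : ℂ) :
    wp τ (z + l) = wp τ z := by
  simp only [wp_eq_weierstrassP hτ]
  exact (standardPair τ hτ).weierstrassP_add_coe z ⟨l, (mem_standardPair_lattice hτ).2 hl⟩

theorem InLattice.add {τ a b : ℂ} (ha : InLattice τ a) (hb : InLattice τ b) :
    InLattice τ (a + b) := by
  obtain ⟨m, n, rfl⟩ := ha
  obtain ⟨m', n', rfl⟩ := hb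
  exact ⟨m + m', n + n', by push_cast; ring⟩

theorem InLattice.neg {τ a : ℂ} (ha : InLattice τ a) : InLattice τ (-a) := by
  obtain ⟨m, n, rfl⟩ := ha
  exact ⟨-m, -n, by push_cast; ring⟩

theorem InLattice.sub {τ a b : ℂ} (ha : InLattice τ a) (hb : InLattice τ b) :
    InLattice τ (a - b) := by
  rw [sub_eq_add_neg]
  exact ha.add hb.neg

theorem inLattice_one (τ : ℂ) : InLattice τ 1 := ⟨1, 0, by simp⟩

theorem inLattice_self (τ : ℂ) : InLattice τ τ := ⟨0, 1, by simp⟩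

theorem inLattice_neg_iff {τ a : ℂ} : InLattice τ (-a) ↔ InLattice τ a :=
  ⟨fun h => by simpa using h.neg, InLattice.neg⟩

theorem inLattice_add_iff {τ a l : ℂ} (hl : InLattice τ l) :
    InLattice τ (a + l) ↔ InLattice τ a :=
  ⟨fun h => by simpa using h.sub hl, fun h => h.add hl⟩

theorem isOpen_not_inLattice {τ : ℂ} (hτ : 0 < τ.im) : IsOpen {z | ¬ InLattice τ z} := by
  have h := (standardPair τ hτ).isClosed_lattice.isOpen_compl
  convert h using 1
  ext z
  exact not_congr (mem_standardPair_lattice hτ).symm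

theorem eventually_not_inLattice {τ : ℂ} (hτ : 0 < τ.im) (z : ℂ) :
    ∀ᶠ y in 𝓝[≠] z, ¬ InLattice τ y := by
  have h := (standardPair τ hτ).compl_lattice_sdiff_singleton_mem_nhds z
  filter_upwards [nhdsWithin_le_nhds h, self_mem_nhdsWithin] with y hy hne hin
  exact hy ⟨(mem_standardPair_lattice hτ).2 hin, hne⟩

theorem countable_inLattice (τ : ℂ) : {z | InLattice τ z}.Countable := by
  refine (Set.countable_range fun w : ℤ × ℤ => (w.1 : ℂ) + w.2 * τ).mono ?_
  rintro z ⟨m, n, h⟩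
  exact ⟨(m, n), h.symm⟩

theorem isPreconnected_not_inLattice (τ : ℂ) : IsPreconnected {z | ¬ InLattice τ z} := by
  have := (countable_inLattice τ).isConnected_compl_of_one_lt_rank
    (by simp [Complex.rank_real_complex])
  exact this.isPreconnected

theorem hasDerivAt_mk_right {f : ℂ × ℂ → ℂ} {x : ℂ × ℂ} (hf : DifferentiableAt ℂ f x) :
    HasDerivAt (fun z => f (x.1, z)) (fderiv ℂ f x (0, 1)) x.2 :=
  hf.hasFDerivAt.comp_hasDerivAt x.2
    ((hasDerivAt_const x.2 x.1).prodMk (hasDerivAt_id x.2))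

theorem hasDerivAt_zetaReg {τ z : ℂ} (h : OffPeriods (τ, z)) :
    HasDerivAt (fun y => zetaReg (τ, y)) (-(wp τ z - z⁻¹ ^ 2)) z := by
  have h1 := hasDerivAt_mk_right ((contDiffAt_zetaReg h 1).differentiableAt (by simp))
  rwa [fderiv_zetaReg_apply h] at h1

theorem zeta_sub_inv_eq_zetaReg {zeta : ℂ → ℂ → ℂ} (hzeta : IsWeierstrassZeta zeta) {x : ℂ × ℂ}
    (hx : OffPeriods x) : zeta x.1 x.2 - x.2⁻¹ = zetaReg x := by
  obtain ⟨τ, z⟩ := x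
  have hτ : 0 < τ.im := hx.1
  obtain ⟨hodd, hder, hlim⟩ := hzeta τ hτ
  by_cases hz0 : z = 0
  · subst hz0
    have h0 := hodd 0
    rw [neg_zero, self_eq_neg] at h0
    simp [h0, zetaReg_zero]
  have hd : ∀ y, ¬ InLattice τ y →
      HasDerivAt (fun y => zeta τ y - y⁻¹ - zetaReg (τ, y)) 0 y := by
    intro y hy
    have hy0 : y ≠ 0 := by
      rintro rfl
      exact hy ⟨0, 0, by simp⟩
    exact (((hder y hy).fun_sub (hasDerivAt_inv hy0)).fun_sub
      (hasDerivAt_zetaReg (offPeriods_of_not_inLattice hτ hy))).congr_deriv (by ring)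
  obtain ⟨a, ha⟩ := (isOpen_not_inLattice hτ).exists_is_const_of_deriv_eq_zero
    (isPreconnected_not_inLattice τ) (fun y hy => (hd y hy).differentiableAt.differentiableWithinAt)
    (fun y hy => (hd y hy).deriv)
  have hreg : Tendsto (fun y => zetaReg (τ, y)) (𝓝[≠] 0) (𝓝 0) := by
    have := (hasDerivAt_zetaReg (offPeriods_zero hτ)).continuousAt.tendsto
    rw [zetaReg_zero] at this
    exact this.mono_left nhdsWithin_le_nhds
  have h1 := hlim.sub hreg
  rw [sub_zero] at h1
  have h2 : Tendsto (fun y => zeta τ y - y⁻¹ - zetaReg (τ, y)) (𝓝[≠] 0) (𝓝 a) := by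
    refine tendsto_const_nhds.congr' ?_
    filter_upwards [eventually_not_inLattice hτ 0] with y hy
    exact (ha y hy).symm
  have h3 := ha z (not_inLattice_of_offPeriods hx hz0)
  rw [tendsto_nhds_unique h2 h1, sub_eq_zero] at h3
  exact h3

theorem contDiffAt_zeta_sub_inv {zeta : ℂ → ℂ → ℂ} (hzeta : IsWeierstrassZeta zeta) {x : ℂ × ℂ}
    (hx : OffPeriods x) (n : ℕ) :
    ContDiffAt ℂ n (fun y : ℂ × ℂ => zeta y.1 y.2 - y.2⁻¹) x :=
  (contDiffAt_zetaReg hx n).congr_of_eventuallyEq <|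
    (eventually_offPeriods hx).mono fun _ hy => zeta_sub_inv_eq_zetaReg hzeta hy

theorem contDiffAt_wp_sub_inv_sq {x : ℂ × ℂ} (hx : OffPeriods x) (n : ℕ) :
    ContDiffAt ℂ n (fun y : ℂ × ℂ => wp y.1 y.2 - y.2⁻¹ ^ 2) x := by
  have h := ((contDiffAt_zetaReg hx (n + 1)).fderiv_right (m := n) (by norm_cast)).clm_apply
    (contDiffAt_const (c := ((0 : ℂ), (1 : ℂ))))
  refine h.neg.congr_of_eventuallyEq ((eventually_offPeriods hx).mono fun y hy => ?_)
  simp [fderiv_zetaReg_apply hy]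

theorem ne_zero_of_not_inLattice {τ z : ℂ} (hz : ¬ InLattice τ z) : z ≠ 0 := by
  rintro rfl
  exact hz ⟨0, 0, by simp⟩

theorem contDiffAt_zeta {zeta : ℂ → ℂ → ℂ} (hzeta : IsWeierstrassZeta zeta) {τ z : ℂ}
    (hτ : 0 < τ.im) (hz : ¬ InLattice τ z) (n : ℕ) :
    ContDiffAt ℂ n (fun y : ℂ × ℂ => zeta y.1 y.2) (τ, z) := by
  have h := (contDiffAt_zeta_sub_inv hzeta (offPeriods_of_not_inLattice hτ hz) n).add
    (contDiffAt_snd.inv (ne_zero_of_not_inLattice hz))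
  simpa using! h

theorem contDiffAt_wp {τ z : ℂ} (hτ : 0 < τ.im) (hz : ¬ InLattice τ z) (n : ℕ) :
    ContDiffAt ℂ n (fun y : ℂ × ℂ => wp y.1 y.2) (τ, z) := by
  have h := (contDiffAt_wp_sub_inv_sq (offPeriods_of_not_inLattice hτ hz) n).add
    ((contDiffAt_snd.inv (ne_zero_of_not_inLattice hz)).pow 2)
  simpa using! h

theorem wp_zero (τ : ℂ) : wp τ 0 = 0 := by
  simp only [wp, zero_sub, inv_neg, neg_sq, sub_self, tsum_zero, inv_zero]
  norm_num

end

noncomputable section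

theorem integral_boundary_rect_inv {a b : ℝ} (ha : 0 < a) (hb : 0 < b) :
    (∫ x : ℝ in -a..a, ((x : ℂ) + (-b : ℝ) * I)⁻¹) - (∫ x : ℝ in -a..a, ((x : ℂ) + b * I)⁻¹) +
      I * (∫ y : ℝ in -b..b, ((a : ℂ) + y * I)⁻¹) -
      I * (∫ y : ℝ in -b..b, (((-a : ℝ) : ℂ) + y * I)⁻¹) = 2 * Real.pi * I := by
  have htop : (∫ x : ℝ in -a..a, ((x : ℂ) + b * I)⁻¹) =
      -∫ x : ℝ in -a..a, ((x : ℂ) + (-b : ℝ) * I)⁻¹ := by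
    have h := intervalIntegral.integral_comp_neg (a := -a) (b := a)
      (fun x : ℝ => ((x : ℂ) + b * I)⁻¹)
    rw [neg_neg] at h
    rw [← h, ← intervalIntegral.integral_neg]
    refine intervalIntegral.integral_congr fun x _ => ?_
    rw [← inv_neg]
    congr 1
    push_cast
    ring
  have hleft : (∫ y : ℝ in -b..b, (((-a : ℝ) : ℂ) + y * I)⁻¹) =
      -∫ y : ℝ in -b..b, ((a : ℂ) + y * I)⁻¹ := by
    have h := intervalIntegral.integral_comp_neg (a := -b) (b := b)
      (fun y : ℝ => (((-a : ℝ) : ℂ) + y * I)⁻¹)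
    rw [neg_neg] at h
    rw [← h, ← intervalIntegral.integral_neg]
    refine intervalIntegral.integral_congr fun x _ => ?_
    rw [← inv_neg]
    congr 1
    push_cast
    ring
  have hbottom : (∫ x : ℝ in -a..a, ((x : ℂ) + (-b : ℝ) * I)⁻¹) =
      log ((a : ℂ) + (-b : ℝ) * I) - log (((-a : ℝ) : ℂ) + (-b : ℝ) * I) := by
    have hne : ∀ x : ℝ, (x : ℂ) + (-b : ℝ) * I ∈ slitPlane := fun x => Or.inr (by simpa using hb.ne')
    refine intervalIntegral.integral_eq_sub_of_hasDerivAt (f := fun x : ℝ =>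
      log ((x : ℂ) + (-b : ℝ) * I)) (fun x _ => ?_) ?_
    · have h := ((ofRealCLM.hasDerivAt (x := x)).add_const (((-b : ℝ) : ℂ) * I)).clog_real (hne x)
      simpa using! h
    · refine ContinuousOn.intervalIntegrable ?_
      exact ContinuousOn.inv₀ (by fun_prop) fun x _ => slitPlane_ne_zero (hne x)
  have hright : I * (∫ y : ℝ in -b..b, ((a : ℂ) + y * I)⁻¹) =
      log ((a : ℂ) + b * I) - log ((a : ℂ) + (-b : ℝ) * I) := by
    have hne : ∀ y : ℝ, (a : ℂ) + y * I ∈ slitPlane := fun y => Or.inl (by simpa using ha)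
    rw [← intervalIntegral.integral_const_mul]
    refine intervalIntegral.integral_eq_sub_of_hasDerivAt (f := fun y : ℝ =>
      log ((a : ℂ) + y * I)) (fun y _ => ?_) ?_
    · have h := (((ofRealCLM.hasDerivAt (x := y)).mul_const I).const_add (a : ℂ)).clog_real (hne y)
      simpa [div_eq_mul_inv] using! h
    · refine ContinuousOn.intervalIntegrable ?_
      exact continuousOn_const.mul
        (ContinuousOn.inv₀ (by fun_prop) fun x _ => slitPlane_ne_zero (hne x))
  have hlog : log ((a : ℂ) + b * I) = log (((-a : ℝ) : ℂ) + (-b : ℝ) * I) + Real.pi * I := by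
    have h1 : (a : ℂ) + b * I = -(((-a : ℝ) : ℂ) + (-b : ℝ) * I) := by
      push_cast
      ring
    have h2 : (((-a : ℝ) : ℂ) + (-b : ℝ) * I).im < 0 := by simpa using hb
    rw [h1, log, log, norm_neg, arg_neg_eq_arg_add_pi_of_im_neg h2]
    push_cast
    ring
  rw [htop, hleft]
  linear_combination 2 * hbottom + 2 * hright + 2 * hlog

theorem exists_quasiPeriod {zeta : ℂ → ℂ → ℂ} (hzeta : IsWeierstrassZeta zeta) {τ : ℂ}
    (hτ : 0 < τ.im) : ∃ η : ℂ, ∀ z, ¬ InLattice τ z → zeta τ (z + τ) - zeta τ z = η := by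
  have hd : ∀ z, ¬ InLattice τ z → HasDerivAt (fun z => zeta τ (z + τ) - zeta τ z) 0 z := by
    intro z hz
    have h1 := (hzeta τ hτ).2.1 (z + τ) (mt (inLattice_add_iff (inLattice_self τ)).1 hz)
    refine ((h1.comp_add_const z τ).fun_sub ((hzeta τ hτ).2.1 z hz)).congr_deriv ?_
    rw [wp_add_of_inLattice hτ (inLattice_self τ), sub_self]
  exact (isOpen_not_inLattice hτ).exists_is_const_of_deriv_eq_zero
    (isPreconnected_not_inLattice τ) (fun y hy => (hd y hy).differentiableAt.differentiableWithinAt)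
    (fun y hy => (hd y hy).deriv)

theorem offPeriods_of_abs_le {τ z : ℂ} (hτ : 0 < τ.im) (hre : |z.re| ≤ 1 / 2)
    (him : |z.im| ≤ τ.im / 2) : OffPeriods (τ, z) := by
  refine ⟨hτ, ?_⟩
  rintro ⟨⟨m, n⟩, hw⟩ hz
  simp only [latticePoint] at hz
  have h2 : z.im = n * τ.im := by simp [hz]
  have hn : n = 0 := by
    rw [h2, abs_mul, abs_of_pos hτ] at him
    have h3 : |(n : ℝ)| < 1 := by nlinarith
    rw [← Int.cast_abs] at h3
    exact Int.abs_lt_one_iff.1 (by exact_mod_cast h3)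
  have h1 : z.re = m := by simp [hz, hn]
  have hm : m = 0 := by
    rw [h1] at hre
    have h3 : |(m : ℝ)| < 1 := by linarith
    rw [← Int.cast_abs] at h3
    exact Int.abs_lt_one_iff.1 (by exact_mod_cast h3)
  exact hw (by rw [hm, hn]; rfl)

/-- **Legendre relation.** -/
theorem zeta_add_tau {zeta : ℂ → ℂ → ℂ} {eta1 : ℂ → ℂ} (hzeta : IsWeierstrassZeta zeta)
    (heta1 : IsEta1 zeta eta1) {τ z : ℂ} (hτ : 0 < τ.im) (hz : ¬ InLattice τ z) :
    zeta τ (z + τ) = zeta τ z + τ * eta1 τ - 2 * Real.pi * I := by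
  obtain ⟨η, hη⟩ := exists_quasiPeriod hzeta hτ
  suffices h : η - τ * eta1 τ = -(2 * Real.pi * I) by
    linear_combination hη z hz + h
  set b : ℝ := τ.im / 2 with hb
  have hb0 : 0 < b := by positivity
  set g : ℂ → ℂ := fun z => zetaReg (τ, z) - eta1 τ * z with hg
  set f : ℂ → ℂ := fun z => zeta τ z - eta1 τ * z with hf
  have hgd : ∀ z, OffPeriods (τ, z) → DifferentiableAt ℂ g z := fun z hz =>
    (hasDerivAt_zetaReg hz).differentiableAt.sub (by fun_prop)
  have hgf : ∀ z, OffPeriods (τ, z) → g z = f z - z⁻¹ := by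
    intro z hz
    have := zeta_sub_inv_eq_zetaReg hzeta hz
    simp only [hg, hf, ← this]
    ring
  have hfd : ∀ z, ¬ InLattice τ z → DifferentiableAt ℂ f z := fun z hz =>
    ((hzeta τ hτ).2.1 z hz).differentiableAt.sub (by fun_prop)
  have hf1 : ∀ z, ¬ InLattice τ z → f (z + 1) = f z := by
    intro z hz
    simp only [hf, heta1 τ hτ z hz]
    ring
  have hfτ : ∀ z, ¬ InLattice τ z → f (z + τ) = f z + (η - τ * eta1 τ) := by
    intro z hz
    simp only [hf, ← hη z hz]
    ring
  have hrect := integral_boundary_rect_eq_zero_of_differentiableOn g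
    (⟨-(1 / 2), -b⟩ : ℂ) (⟨1 / 2, b⟩ : ℂ) (by
      rintro z ⟨hzre, hzim⟩
      change z.re ∈ Set.uIcc (-(1 / 2)) (1 / 2) at hzre
      change z.im ∈ Set.uIcc (-b) b at hzim
      rw [Set.uIcc_of_le (by norm_num), Set.mem_Icc, ← abs_le] at hzre
      rw [Set.uIcc_of_le (by linarith), Set.mem_Icc, ← abs_le] at hzim
      exact (hgd z (offPeriods_of_abs_le hτ hzre hzim)).differentiableWithinAt)
  have hoff_h : ∀ x ∈ Set.uIcc (-(1 / 2) : ℝ) (1 / 2), ∀ s : ℝ, |s| = b →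
      OffPeriods (τ, (x : ℂ) + s * I) := by
    intro x hx s hs
    rw [Set.uIcc_of_le (by norm_num), Set.mem_Icc, ← abs_le] at hx
    exact offPeriods_of_abs_le hτ (by simpa using hx) (by simp [hs, hb])
  have hoff_v : ∀ y ∈ Set.uIcc (-b) b, ∀ s : ℝ, |s| = 1 / 2 →
      OffPeriods (τ, (s : ℂ) + y * I) := by
    intro y hy s hs
    rw [Set.uIcc_of_le (by linarith), Set.mem_Icc, ← abs_le] at hy
    exact offPeriods_of_abs_le hτ (by simp [hs]) (by simpa using hy)
  have hne_h : ∀ x s : ℝ, |s| = b → (x : ℂ) + s * I ≠ 0 := by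
    intro x s hs h
    have := congrArg Complex.im h
    simp only [add_im, ofReal_im, mul_im, ofReal_re, I_im, mul_one, I_re, mul_zero, add_zero,
      zero_add, zero_im] at this
    rw [this, abs_zero] at hs
    linarith
  have hne_v : ∀ y s : ℝ, |s| = 1 / 2 → (s : ℂ) + y * I ≠ 0 := by
    intro y s hs h
    have := congrArg Complex.re h
    simp only [add_re, ofReal_re, mul_re, I_re, mul_zero, ofReal_im, I_im, mul_one, sub_self,
      add_zero, zero_re] at this
    rw [this, abs_zero] at hs
    norm_num at hs
  have hint_h : ∀ s : ℝ, |s| = b → (∫ x : ℝ in -(1 / 2)..(1 / 2), g (x + s * I)) =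
      (∫ x : ℝ in -(1 / 2)..(1 / 2), f (x + s * I)) -
        ∫ x : ℝ in -(1 / 2)..(1 / 2), ((x : ℂ) + s * I)⁻¹ := by
    intro s hs
    rw [← intervalIntegral.integral_sub]
    · exact intervalIntegral.integral_congr fun x hx => hgf _ (hoff_h x hx s hs)
    · refine ContinuousOn.intervalIntegrable fun x hx => ContinuousAt.continuousWithinAt ?_
      exact ContinuousAt.comp (f := fun x : ℝ => (x : ℂ) + s * I) (hfd _
        (not_inLattice_of_offPeriods (hoff_h x hx s hs) (hne_h x s hs))).continuousAt (by fun_prop)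
    · refine ContinuousOn.intervalIntegrable ?_
      exact ContinuousOn.inv₀ (by fun_prop) fun x _ => hne_h x s hs
  have hint_v : ∀ s : ℝ, |s| = 1 / 2 → (∫ y : ℝ in -b..b, g (s + y * I)) =
      (∫ y : ℝ in -b..b, f (s + y * I)) - ∫ y : ℝ in -b..b, ((s : ℂ) + y * I)⁻¹ := by
    intro s hs
    rw [← intervalIntegral.integral_sub]
    · exact intervalIntegral.integral_congr fun y hy => hgf _ (hoff_v y hy s hs)
    · refine ContinuousOn.intervalIntegrable fun y hy => ContinuousAt.continuousWithinAt ?_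
      exact ContinuousAt.comp (f := fun y : ℝ => (s : ℂ) + y * I) (hfd _
        (not_inLattice_of_offPeriods (hoff_v y hy s hs) (hne_v y s hs))).continuousAt (by fun_prop)
    · refine ContinuousOn.intervalIntegrable ?_
      exact ContinuousOn.inv₀ (by fun_prop) fun y _ => hne_v y s hs
  have hsides : (∫ y : ℝ in -b..b, f ((1 / 2 : ℝ) + y * I)) =
      ∫ y : ℝ in -b..b, f ((-(1 / 2) : ℝ) + y * I) := by
    refine intervalIntegral.integral_congr fun y hy => ?_
    have hs : |(-(1 / 2) : ℝ)| = 1 / 2 := by norm_num [abs_of_pos]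
    have h := hf1 _ (not_inLattice_of_offPeriods (hoff_v y hy _ hs) (hne_v y _ hs))
    rw [← h]
    congr 1
    push_cast
    ring
  have hbot : ∀ x : ℝ, ¬ InLattice τ ((x : ℂ) + (-b : ℝ) * I) := by
    rintro x ⟨m, n, h⟩
    have h2 := congrArg Complex.im h
    simp only [add_im, ofReal_im, mul_im, ofReal_re, I_im, mul_one, I_re, mul_zero, add_zero,
      zero_add, intCast_im, intCast_re, zero_mul, hb] at h2
    have h3 : (2 * n + 1 : ℝ) * τ.im = 0 := by linear_combination -2 * h2
    rcases mul_eq_zero.1 h3 with h4 | h4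
    · have h5 : 2 * n + 1 = 0 := by exact_mod_cast h4
      omega
    · exact hτ.ne' h4
  have htop : (∫ x : ℝ in -(1 / 2)..(1 / 2), f (x + b * I)) =
      (∫ x : ℝ in -(1 / 2)..(1 / 2), f (x + (-b : ℝ) * I)) + (η - τ * eta1 τ) := by
    set φ : ℝ → ℂ := fun x => f (x + (-b : ℝ) * I) with hφ
    have hper : Function.Periodic φ 1 := by
      intro x
      simp only [hφ]
      rw [← hf1 _ (hbot x)]
      congr 1
      push_cast
      ring
    have hcont : Continuous φ := continuous_iff_continuousAt.2 fun x =>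
      ContinuousAt.comp (f := fun x : ℝ => (x : ℂ) + (-b : ℝ) * I) (hfd _ (hbot x)).continuousAt
        (by fun_prop)
    have h1 : (∫ x : ℝ in -(1 / 2)..(1 / 2), f (x + b * I)) =
        ∫ x : ℝ in -(1 / 2)..(1 / 2), (φ (x - τ.re) + (η - τ * eta1 τ)) := by
      refine intervalIntegral.integral_congr fun x _ => ?_
      simp only [hφ]
      rw [← hfτ _ (hbot _)]
      congr 1
      apply Complex.ext <;> simp [hb]
      ring
    have hshift : Continuous fun x : ℝ => φ (x - τ.re) :=
      hcont.comp (continuous_id.sub continuous_const)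
    rw [h1, intervalIntegral.integral_add (hshift.intervalIntegrable _ _)
      (continuous_const.intervalIntegrable _ _), intervalIntegral.integral_comp_sub_right φ τ.re]
    have h2 := hper.intervalIntegral_add_eq (-(1 / 2) - τ.re) (-(1 / 2))
    rw [show (-(1 / 2) - τ.re + 1 : ℝ) = 1 / 2 - τ.re by ring,
      show (-(1 / 2) + 1 : ℝ) = 1 / 2 by ring] at h2
    rw [h2, intervalIntegral.integral_const]
    norm_num
  have hinv := integral_boundary_rect_inv (a := 1 / 2) (by norm_num) hb0
  simp only [smul_eq_mul] at hrect
  rw [hint_h (-b) (by rw [abs_neg, abs_of_pos hb0]), hint_h b (abs_of_pos hb0),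
    hint_v (1 / 2) (by norm_num), hint_v (-(1 / 2)) (by norm_num [abs_of_pos]), hsides, htop]
    at hrect
  linear_combination -hrect - hinv

end

noncomputable section

/-- The expression `W''' - 4 J W' - 2 J_z W + 2 J_t` at the point `(τ, z)`. -/
def defect (J : ℂ → ℂ → ℂ) (W : ℂ → ℂ) (τ z : ℂ) : ℂ :=
  deriv (deriv (deriv W)) z - 4 * J τ z * deriv W z - 2 * deriv (J τ) z * W z
    + 2 * deriv (fun t => J t z) τ

theorem hasDerivAt_mk_left {f : ℂ × ℂ → ℂ} {x : ℂ × ℂ} (hf : DifferentiableAt ℂ f x) :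
    HasDerivAt (fun t => f (t, x.2)) (fderiv ℂ f x (1, 0)) x.1 :=
  hf.hasFDerivAt.comp_hasDerivAt x.1
    ((hasDerivAt_id x.1).prodMk (hasDerivAt_const x.1 x.2))

/-- The derivative of `f` along a curve `t ↦ (t, q t)`. -/
theorem hasDerivAt_along {f : ℂ × ℂ → ℂ} {q : ℂ → ℂ} {τ q' z : ℂ}
    (hf : DifferentiableAt ℂ f (τ, z)) (hq : HasDerivAt q q' τ) (hz : q τ = z) :
    HasDerivAt (fun t => f (t, q t)) (fderiv ℂ f (τ, z) (1, 0) + q' * fderiv ℂ f (τ, z) (0, 1)) τ := by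
  subst hz
  have h := hf.hasFDerivAt.comp_hasDerivAt τ ((hasDerivAt_id τ).prodMk hq)
  refine h.congr_deriv ?_
  have : ((1 : ℂ), q') = (1, 0) + q' • ((0 : ℂ), (1 : ℂ)) := by simp
  rw [this, map_add, map_smul, smul_eq_mul]

theorem tendsto_mk_right (τ z : ℂ) : Tendsto (fun w : ℂ => (τ, w)) (𝓝 z) (𝓝 (τ, z)) :=
  (continuous_const.prodMk continuous_id).tendsto z

theorem hasDerivAt_inv_sq {w : ℂ} (hw : w ≠ 0) :
    HasDerivAt (fun y : ℂ => y⁻¹ ^ 2) (-2 * w⁻¹ ^ 3) w := by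
  have h := (hasDerivAt_inv hw).fun_pow 2
  refine h.congr_deriv ?_
  simp
  ring

section MovingFrame

variable {J : ℂ → ℂ → ℂ} {C : ℂ × ℂ → ℂ} {s b : ℂ → ℂ} {τ s' b' a : ℂ}

theorem eventually_differentiableAt_mk (hC : ContDiffAt ℂ 2 C (τ, 0)) :
    ∀ᶠ w in 𝓝[≠] (0 : ℂ), DifferentiableAt ℂ C (τ, w) := by
  have h := (hC.eventually (by simp)).mono fun x hx => hx.differentiableAt (by simp)
  exact nhdsWithin_le_nhds ((tendsto_mk_right τ 0).eventually h)

theorem eventually_deriv_right_of_polar (hC : ContDiffAt ℂ 2 C (τ, 0))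
    (hJ : ∀ t w, J t (s t + w) = a * w⁻¹ ^ 2 + b t * w⁻¹ + C (t, w)) :
    ∀ᶠ w in 𝓝[≠] (0 : ℂ), deriv (J τ) (s τ + w) =
      -2 * a * w⁻¹ ^ 3 - b τ * w⁻¹ ^ 2 + fderiv ℂ C (τ, w) (0, 1) := by
  filter_upwards [eventually_differentiableAt_mk hC, self_mem_nhdsWithin] with w hw hw0
  rw [← deriv_comp_const_add]
  simp only [hJ]
  have h := (((hasDerivAt_inv_sq hw0).const_mul a).fun_add
    ((hasDerivAt_inv hw0).const_mul (b τ))).fun_add (hasDerivAt_mk_right hw)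
  rw [h.deriv]
  ring

theorem eventually_deriv_left_of_polar (hC : ContDiffAt ℂ 2 C (τ, 0)) (hs : HasDerivAt s s' τ)
    (hb : HasDerivAt b b' τ)
    (hJ : ∀ t w, J t (s t + w) = a * w⁻¹ ^ 2 + b t * w⁻¹ + C (t, w)) :
    ∀ᶠ w in 𝓝[≠] (0 : ℂ), deriv (fun t => J t (s τ + w)) τ =
      2 * a * s' * w⁻¹ ^ 3 + b' * w⁻¹ + b τ * s' * w⁻¹ ^ 2 + fderiv ℂ C (τ, w) (1, 0)
        - s' * fderiv ℂ C (τ, w) (0, 1) := by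
  filter_upwards [eventually_differentiableAt_mk hC, self_mem_nhdsWithin] with w hw hw0
  have hq : HasDerivAt (fun t => w + s τ - s t) (-s') τ := by
    simpa using! hs.const_sub (w + s τ)
  have hq0 : w + s τ - s τ = w := by ring
  have hq1 : (fun t => J t (s τ + w)) = fun t => a * (w + s τ - s t)⁻¹ ^ 2
      + b t * (w + s τ - s t)⁻¹ + C (t, w + s τ - s t) := by
    funext t
    rw [← hJ]
    congr 1
    ring
  have hinv := HasDerivAt.comp τ (h₂ := fun y : ℂ => y⁻¹) (by rw [hq0]; exact hasDerivAt_inv hw0) hq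
  have hsq := HasDerivAt.comp τ (h₂ := fun y : ℂ => y⁻¹ ^ 2)
    (by rw [hq0]; exact hasDerivAt_inv_sq hw0) hq
  have h := ((hsq.const_mul a).fun_add (hb.fun_mul hinv)).fun_add (hasDerivAt_along hw hq hq0)
  rw [hq1]
  refine h.deriv.trans ?_
  simp only [Function.comp_apply, hq0]
  ring

theorem tendsto_fderiv_left (hC : ContDiffAt ℂ 2 C (τ, 0)) :
    Tendsto (fun w => fderiv ℂ C (τ, w) (1, 0)) (𝓝[≠] 0) (𝓝 (fderiv ℂ C (τ, 0) (1, 0))) := by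
  have h := ((hC.fderiv_right (m := 1) (by norm_num)).clm_apply
    (contDiffAt_const (c := ((1 : ℂ), (0 : ℂ))))).continuousAt
  exact (h.tendsto.comp (tendsto_mk_right τ 0)).mono_left nhdsWithin_le_nhds

theorem analyticAt_mk_right (hC : ContDiffAt ℂ 2 C (τ, 0)) :
    AnalyticAt ℂ (fun w => C (τ, w)) 0 := by
  rw [Complex.analyticAt_iff_eventually_differentiableAt]
  have h := (hC.eventually (by simp)).mono fun x hx => hx.differentiableAt (by simp)
  exact ((tendsto_mk_right τ 0).eventually h).mono fun w hw =>
    (hasDerivAt_mk_right hw).differentiableAt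

theorem exists_taylor_quadratic (hC : ContDiffAt ℂ 2 C (τ, 0)) :
    ∃ H : ℂ → ℂ, AnalyticAt ℂ H 0 ∧
      (∀ w, C (τ, w) = C (τ, 0) + fderiv ℂ C (τ, 0) (0, 1) * w + w ^ 2 * H w) ∧
      ∀ᶠ w in 𝓝[≠] (0 : ℂ), fderiv ℂ C (τ, w) (0, 1) =
        fderiv ℂ C (τ, 0) (0, 1) + 2 * w * H w + w ^ 2 * deriv H w := by
  obtain ⟨H, hH, hCH⟩ := (analyticAt_mk_right hC).exists_eq_sum_add_pow_mul 2
  have h1 : deriv (fun w => C (τ, w)) 0 = fderiv ℂ C (τ, 0) (0, 1) :=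
    (hasDerivAt_mk_right (hC.differentiableAt (by simp))).deriv
  have hCH' : ∀ w, C (τ, w) = C (τ, 0) + fderiv ℂ C (τ, 0) (0, 1) * w + w ^ 2 * H w := by
    intro w
    simpa [Finset.sum_range_succ, h1, mul_comm w] using hCH w
  refine ⟨H, hH, hCH', ?_⟩
  filter_upwards [eventually_differentiableAt_mk hC,
    nhdsWithin_le_nhds hH.eventually_analyticAt] with w hw hHw
  have h2 := (hasDerivAt_mk_right hw).deriv
  have h3 := (((hasDerivAt_id' w).const_mul (fderiv ℂ C (τ, 0) (0, 1))).const_add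
    (C (τ, 0))).fun_add (((hasDerivAt_id' w).fun_pow 2).fun_mul hHw.differentiableAt.hasDerivAt)
  rw [← h2, show (fun z => C ((τ, w).1, z)) = _ from funext hCH', h3.deriv]
  ring

end MovingFrame

theorem exists_taylor_cubic {G : ℂ → ℂ} (hG : AnalyticAt ℂ G 0) :
    ∃ F : ℂ → ℂ, AnalyticAt ℂ F 0 ∧
      (∀ w, G w = G 0 + deriv G 0 * w + deriv (deriv G) 0 / 2 * w ^ 2 + w ^ 3 * F w) ∧
      (∀ᶠ w in 𝓝 (0 : ℂ), deriv G w =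
        deriv G 0 + deriv (deriv G) 0 * w + 3 * w ^ 2 * F w + w ^ 3 * deriv F w) ∧
      Tendsto (deriv (deriv (deriv G))) (𝓝[≠] 0) (𝓝 (6 * F 0)) := by
  obtain ⟨F, hF, hGF⟩ := hG.exists_eq_sum_add_pow_mul 3
  have hGF' : ∀ w, G w = G 0 + deriv G 0 * w + deriv (deriv G) 0 / 2 * w ^ 2 + w ^ 3 * F w := by
    intro w
    rw [hGF w]
    simp [Finset.sum_range_succ, iteratedDeriv_succ]
    ring
  have hd1 : ∀ᶠ w in 𝓝 (0 : ℂ), deriv G w =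
      deriv G 0 + deriv (deriv G) 0 * w + 3 * w ^ 2 * F w + w ^ 3 * deriv F w := by
    filter_upwards [hF.eventually_analyticAt] with w hFw
    have h := ((((hasDerivAt_id' w).const_mul (deriv G 0)).const_add (G 0)).fun_add
      (((hasDerivAt_id' w).fun_pow 2).const_mul (deriv (deriv G) 0 / 2))).fun_add
      (((hasDerivAt_id' w).fun_pow 3).fun_mul hFw.differentiableAt.hasDerivAt)
    rw [EventuallyEq.deriv_eq (Eventually.of_forall hGF'), h.deriv]
    simp
    ring
  have hd2 : ∀ᶠ w in 𝓝 (0 : ℂ), deriv (deriv G) w = deriv (deriv G) 0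
      + 6 * w * F w + 6 * w ^ 2 * deriv F w + w ^ 3 * deriv (deriv F) w := by
    filter_upwards [hF.eventually_analyticAt, hd1.eventually_nhds] with w hFw hw
    have h := ((((hasDerivAt_id' w).const_mul (deriv (deriv G) 0)).const_add
      (deriv G 0)).fun_add ((((hasDerivAt_id' w).fun_pow 2).const_mul 3).fun_mul
      hFw.differentiableAt.hasDerivAt)).fun_add (((hasDerivAt_id' w).fun_pow 3).fun_mul
      hFw.deriv.differentiableAt.hasDerivAt)
    rw [EventuallyEq.deriv_eq hw, h.deriv]
    simp
    ring
  have hd3 : deriv (deriv (deriv G)) 0 = 6 * F 0 := by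
    have h := (((((hasDerivAt_id' (0 : ℂ)).const_mul 6).fun_mul
      hF.differentiableAt.hasDerivAt).const_add (deriv (deriv G) 0)).fun_add
      ((((hasDerivAt_id' (0 : ℂ)).fun_pow 2).const_mul 6).fun_mul
      hF.deriv.differentiableAt.hasDerivAt)).fun_add
      (((hasDerivAt_id' (0 : ℂ)).fun_pow 3).fun_mul hF.deriv.deriv.differentiableAt.hasDerivAt)
    rw [EventuallyEq.deriv_eq hd2, h.deriv]
    simp
  refine ⟨F, hF, hGF', hd1, ?_⟩
  rw [← hd3]
  exact hG.deriv.deriv.deriv.continuousAt.tendsto.mono_left nhdsWithin_le_nhds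

theorem eventually_deriv_of_simple_pole {W G : ℂ → ℂ} {s c : ℂ} (hG : AnalyticAt ℂ G 0)
    (hW : ∀ w, W (s + w) = c * w⁻¹ + G w) :
    ∀ᶠ w in 𝓝[≠] (0 : ℂ), deriv W (s + w) = -c * w⁻¹ ^ 2 + deriv G w ∧
      deriv (deriv (deriv W)) (s + w) = -6 * c * w⁻¹ ^ 4 + deriv (deriv (deriv G)) w := by
  have h1 : (fun w => deriv W (s + w)) =ᶠ[𝓝[≠] 0] fun w => -c * w⁻¹ ^ 2 + deriv G w := by
    filter_upwards [self_mem_nhdsWithin, nhdsWithin_le_nhds hG.eventually_analyticAt] with w hw0 hGw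
    rw [← deriv_comp_const_add]
    simp only [hW]
    have h := ((hasDerivAt_inv hw0).const_mul c).fun_add hGw.differentiableAt.hasDerivAt
    rw [h.deriv]
    ring
  have h2 : (fun w => deriv (deriv W) (s + w)) =ᶠ[𝓝[≠] 0]
      fun w => 2 * c * w⁻¹ ^ 3 + deriv (deriv G) w := by
    filter_upwards [self_mem_nhdsWithin, nhdsWithin_le_nhds hG.eventually_analyticAt,
      h1.nhdsNE_deriv] with w hw0 hGw hw
    rw [← deriv_comp_const_add, hw]
    have h := ((hasDerivAt_inv_sq hw0).const_mul (-c)).fun_add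
      hGw.deriv.differentiableAt.hasDerivAt
    rw [h.deriv]
    ring
  filter_upwards [self_mem_nhdsWithin, nhdsWithin_le_nhds hG.eventually_analyticAt, h1,
      h2.nhdsNE_deriv] with w hw0 hGw hw1 hw
  refine ⟨hw1, ?_⟩
  rw [← deriv_comp_const_add, hw]
  have h := (((hasDerivAt_inv hw0).fun_pow 3).const_mul (2 * c)).fun_add
    hGw.deriv.deriv.differentiableAt.hasDerivAt
  rw [h.deriv]
  field_simp
  ring

end

noncomputable section

section LocalExpansion

variable {J : ℂ → ℂ → ℂ} {W G : ℂ → ℂ} {C : ℂ × ℂ → ℂ} {s b : ℂ → ℂ} {τ s' b' a c : ℂ}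

/-- Laurent expansion of the defect at a simple pole of `W` at which `J` has leading
coefficient `3 / 4`. -/
theorem exists_defect_expansion (hC : ContDiffAt ℂ 2 C (τ, 0)) (hs : HasDerivAt s s' τ)
    (hb : HasDerivAt b b' τ)
    (hJ : ∀ t w, J t (s t + w) = 3 / 4 * w⁻¹ ^ 2 + b t * w⁻¹ + C (t, w))
    (hG : AnalyticAt ℂ G 0) (hW : ∀ w, W (s τ + w) = c * w⁻¹ + G w) :
    ∃ E : ℂ → ℂ,
      Tendsto E (𝓝[≠] 0) (𝓝 (-3 * b τ * deriv (deriv G) 0 - 4 * C (τ, 0) * deriv G 0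
        - 2 * fderiv ℂ C (τ, 0) (0, 1) * (G 0 + s') + 2 * fderiv ℂ C (τ, 0) (1, 0))) ∧
      ∀ᶠ w in 𝓝[≠] (0 : ℂ), defect J W τ (s τ + w) =
        3 * (2 * b τ * c + G 0 + s') * w⁻¹ ^ 3
        + (4 * c * C (τ, 0) + 2 * b τ * (G 0 + s')) * w⁻¹ ^ 2
        + (-(3 / 2) * deriv (deriv G) 0 - 2 * b τ * deriv G 0
          + 2 * c * fderiv ℂ C (τ, 0) (0, 1) + 2 * b') * w⁻¹ + E w := by
  obtain ⟨F, hF, hGF, hG1, hG3⟩ := exists_taylor_cubic hG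
  obtain ⟨H, hH, hCH, hC1⟩ := exists_taylor_quadratic hC
  set G0 := G 0 with hG0
  set G1 := deriv G 0
  set G2 := deriv (deriv G) 0
  set C0 := C (τ, 0)
  set C1 := fderiv ℂ C (τ, 0) (0, 1)
  refine ⟨fun w => deriv (deriv (deriv G)) w - 6 * F w - 3 * w * deriv F w - 3 * b τ * G2
    - 10 * b τ * w * F w - 4 * b τ * w ^ 2 * deriv F w - 2 * c * w * deriv H w
    - 4 * (C0 + C1 * w + w ^ 2 * H w) * (G1 + G2 * w + 3 * w ^ 2 * F w + w ^ 3 * deriv F w)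
    - 2 * (C1 + 2 * w * H w + w ^ 2 * deriv H w)
      * (G0 + G1 * w + G2 / 2 * w ^ 2 + w ^ 3 * F w + s')
    + 2 * fderiv ℂ C (τ, w) (1, 0), ?_, ?_⟩
  · have hF0 := hF.continuousAt
    have hF1 := hF.deriv.continuousAt
    have hH0 := hH.continuousAt
    have hH1 := hH.deriv.continuousAt
    have hcont : ContinuousAt (fun w => - 6 * F w - 3 * w * deriv F w - 3 * b τ * G2
      - 10 * b τ * w * F w - 4 * b τ * w ^ 2 * deriv F w - 2 * c * w * deriv H w
      - 4 * (C0 + C1 * w + w ^ 2 * H w) * (G1 + G2 * w + 3 * w ^ 2 * F w + w ^ 3 * deriv F w)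
      - 2 * (C1 + 2 * w * H w + w ^ 2 * deriv H w)
        * (G0 + G1 * w + G2 / 2 * w ^ 2 + w ^ 3 * F w + s')) 0 := by
      fun_prop
    have h := (hG3.add (hcont.tendsto.mono_left nhdsWithin_le_nhds)).add
      ((tendsto_fderiv_left hC).const_mul 2)
    refine (h.congr fun w => ?_).trans_eq ?_
    · ring
    · congr 1
      ring
  · filter_upwards [hC1, nhdsWithin_le_nhds hG1, eventually_deriv_of_simple_pole hG hW,
      eventually_deriv_right_of_polar hC hJ, eventually_deriv_left_of_polar hC hs hb hJ,
      self_mem_nhdsWithin] with w h1 h2 ⟨h3, h4⟩ h5 h6 hw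
    have hw0 : w ≠ 0 := hw
    rw [defect, h3, h4, h5, h6, hJ, hW, h1, h2, hCH w, hGF w]
    field_simp
    ring

/-- The defect has a finite limit at a regular point of `W` at which `J` has a double pole
without residue, provided `W` is odd around that point up to the velocity of the pole. -/
theorem exists_tendsto_defect (hC : ContDiffAt ℂ 2 C (τ, 0)) (hs : HasDerivAt s s' τ)
    (hJ : ∀ t w, J t (s t + w) = a * w⁻¹ ^ 2 + C (t, w))
    (hG : AnalyticAt ℂ (fun w => W (s τ + w)) 0)
    (hodd : ∀ᶠ w in 𝓝 (0 : ℂ), W (s τ - w) + s' = -(W (s τ + w) + s')) :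
    ∃ L : ℂ, Tendsto (fun w => defect J W τ (s τ + w)) (𝓝[≠] 0) (𝓝 L) := by
  set G : ℂ → ℂ := fun w => W (s τ + w) with hGdef
  have hW : ∀ w, W (s τ + w) = 0 * w⁻¹ + G w := by simp [hGdef]
  have hJ' : ∀ t w, J t (s t + w) = a * w⁻¹ ^ 2 + (fun _ => (0 : ℂ)) t * w⁻¹ + C (t, w) := by
    simp [hJ]
  have hodd' : ∀ᶠ w in 𝓝 (0 : ℂ), G (-w) = -(G w) - 2 * s' := by
    filter_upwards [hodd] with w hw
    simp only [hGdef, ← sub_eq_add_neg]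
    linear_combination hw
  have hG0 : G 0 = -s' := by
    have := hodd'.self_of_nhds
    rw [neg_zero] at this
    linear_combination this / 2
  have hd1 : ∀ᶠ w in 𝓝 (0 : ℂ), deriv G (-w) = deriv G w := by
    filter_upwards [hodd'.eventually_nhds] with w hw
    have h := EventuallyEq.deriv_eq hw
    rw [deriv_comp_neg, deriv_sub_const, deriv.fun_neg] at h
    exact neg_injective h
  have hG2 : deriv (deriv G) 0 = 0 := by
    have h := EventuallyEq.deriv_eq hd1
    rw [deriv_comp_neg, neg_zero] at h
    exact self_eq_neg.1 h.symm
  obtain ⟨F, hF, hGF, hG1, hG3⟩ := exists_taylor_cubic hG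
  obtain ⟨H, hH, hCH, hC1⟩ := exists_taylor_quadratic hC
  rw [hG0, hG2] at hGF
  rw [hG2] at hG1
  set G1 := deriv G 0
  set C0 := C (τ, 0)
  set C1 := fderiv ℂ C (τ, 0) (0, 1)
  have hF0 := hF.continuousAt
  have hF1 := hF.deriv.continuousAt
  have hH0 := hH.continuousAt
  have hH1 := hH.deriv.continuousAt
  have hcont : ContinuousAt (fun w => -8 * a * F w - 4 * a * w * deriv F w
    - 4 * (C0 + C1 * w + w ^ 2 * H w) * (G1 + 3 * w ^ 2 * F w + w ^ 3 * deriv F w)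
    - 2 * (C1 + 2 * w * H w + w ^ 2 * deriv H w) * (G1 * w + w ^ 3 * F w)) 0 := by
    fun_prop
  refine ⟨_, ((hG3.add (hcont.tendsto.mono_left nhdsWithin_le_nhds)).add
    ((tendsto_fderiv_left hC).const_mul 2)).congr' ?_⟩
  filter_upwards [hC1, nhdsWithin_le_nhds hG1, eventually_deriv_of_simple_pole hG hW,
    eventually_deriv_right_of_polar hC hJ',
    eventually_deriv_left_of_polar hC hs (hasDerivAt_const τ 0) hJ',
    self_mem_nhdsWithin] with w h1 h2 ⟨h3, h4⟩ h5 h6 hw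
  have hw0 : w ≠ 0 := hw
  rw [defect, h3, h4, h5, h6, hJ, hW, h1, h2, hCH w, hGF w]
  field_simp
  ring

/-- A function whose principal part at `0` is cancelled must have zero principal part. -/
theorem polar_coefficients_eq_zero {a₁ a₂ a₃ L : ℂ} {E : ℂ → ℂ} (hE : Tendsto E (𝓝[≠] 0) (𝓝 L))
    (h : ∀ᶠ w in 𝓝[≠] (0 : ℂ), a₃ * w⁻¹ ^ 3 + a₂ * w⁻¹ ^ 2 + a₁ * w⁻¹ + E w = 0) :
    a₃ = 0 ∧ a₂ = 0 ∧ a₁ = 0 := by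
  have hid : Tendsto (fun w : ℂ => w) (𝓝[≠] 0) (𝓝 0) := nhdsWithin_le_nhds
  have h3 : a₃ = 0 := by
    have hlim : Tendsto (fun w => a₃ + a₂ * w + a₁ * w ^ 2 + E w * w ^ 3) (𝓝[≠] 0)
        (𝓝 (a₃ + a₂ * 0 + a₁ * 0 ^ 2 + L * 0 ^ 3)) :=
      (((hid.const_mul a₂).const_add a₃).add ((hid.pow 2).const_mul a₁)).add (hE.mul (hid.pow 3))
    have hzero : Tendsto (fun w => a₃ + a₂ * w + a₁ * w ^ 2 + E w * w ^ 3) (𝓝[≠] 0) (𝓝 0) := by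
      refine tendsto_const_nhds.congr' ?_
      filter_upwards [h, self_mem_nhdsWithin] with w hw hw0
      have hw0 : w ≠ 0 := hw0
      field_simp at hw
      linear_combination -hw
    simpa using tendsto_nhds_unique hlim hzero
  have h2 : a₂ = 0 := by
    have hlim : Tendsto (fun w => a₂ + a₁ * w + E w * w ^ 2) (𝓝[≠] 0)
        (𝓝 (a₂ + a₁ * 0 + L * 0 ^ 2)) :=
      ((hid.const_mul a₁).const_add a₂).add (hE.mul (hid.pow 2))
    have hzero : Tendsto (fun w => a₂ + a₁ * w + E w * w ^ 2) (𝓝[≠] 0) (𝓝 0) := by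
      refine tendsto_const_nhds.congr' ?_
      filter_upwards [h, self_mem_nhdsWithin] with w hw hw0
      have hw0 : w ≠ 0 := hw0
      rw [h3, zero_mul, zero_add] at hw
      field_simp at hw
      linear_combination -hw
    simpa using tendsto_nhds_unique hlim hzero
  refine ⟨h3, h2, ?_⟩
  have hlim : Tendsto (fun w => a₁ + E w * w) (𝓝[≠] 0) (𝓝 (a₁ + L * 0)) :=
    (hE.mul hid).const_add a₁
  have hzero : Tendsto (fun w => a₁ + E w * w) (𝓝[≠] 0) (𝓝 0) := by
    refine tendsto_const_nhds.congr' ?_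
    filter_upwards [h, self_mem_nhdsWithin] with w hw hw0
    have hw0 : w ≠ 0 := hw0
    rw [h3, h2, zero_mul, zero_mul, zero_add, zero_add] at hw
    field_simp at hw
    linear_combination -hw
  simpa using tendsto_nhds_unique hlim hzero

end LocalExpansion

end

noncomputable section

theorem tendsto_add_punctured (z a : ℂ) :
    Tendsto (fun y => y + a) (𝓝[≠] z) (𝓝[≠] (z + a)) := by
  refine tendsto_nhdsWithin_iff.2 ⟨?_, ?_⟩
  · exact ((continuous_add_const a).tendsto z).mono_left nhdsWithin_le_nhds
  · filter_upwards [self_mem_nhdsWithin] with y hy h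
    exact hy (add_right_cancel h)

theorem tendsto_punctured_iff_add {f : ℂ → ℂ} {s : ℂ} {l : Filter ℂ} :
    Tendsto (fun w => f (s + w)) (𝓝[≠] 0) l ↔ Tendsto f (𝓝[≠] s) l := by
  constructor
  · intro h
    have h1 := tendsto_add_punctured s (-s)
    rw [add_neg_cancel] at h1
    simpa [Function.comp_def] using h.comp h1
  · intro h
    have h1 := tendsto_add_punctured 0 s
    rw [zero_add] at h1
    simpa [Function.comp_def, add_comm] using h.comp h1

theorem exists_inLattice_sub_mem {τ : ℂ} (hτ : 0 < τ.im) (z : ℂ) :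
    ∃ l, InLattice τ l ∧ ∃ x ∈ Set.Icc (0 : ℝ) 1, ∃ y ∈ Set.Icc (0 : ℝ) 1,
      z = ((x : ℂ) + y * τ) + l := by
  set y : ℝ := z.im / τ.im with hy
  set x : ℝ := z.re - y * τ.re with hx
  have hz : z = (x : ℂ) + y * τ := by
    apply Complex.ext
    · simp [hx]
    · simp [hy, hτ.ne']
  refine ⟨(⌊x⌋ : ℂ) + (⌊y⌋ : ℂ) * τ, ⟨_, _, rfl⟩, Int.fract x,
    ⟨Int.fract_nonneg x, (Int.fract_lt_one x).le⟩, Int.fract y,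
    ⟨Int.fract_nonneg y, (Int.fract_lt_one y).le⟩, ?_⟩
  have h1 : (x : ℂ) = ⌊x⌋ + (Int.fract x : ℝ) := by exact_mod_cast (Int.floor_add_fract x).symm
  have h2 : (y : ℂ) = ⌊y⌋ + (Int.fract y : ℝ) := by exact_mod_cast (Int.floor_add_fract y).symm
  rw [hz]
  linear_combination h1 + τ * h2

/-- **Liouville's theorem** for functions on `ℂ / Λ` with removable singularities. -/
theorem eq_zero_of_doublyPeriodic_of_tendsto {τ : ℂ} (hτ : 0 < τ.im) {f : ℂ → ℂ}
    (hdiff : ∀ z₀, ∀ᶠ z in 𝓝[≠] z₀, DifferentiableAt ℂ f z)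
    (hlim : ∀ z₀, ∃ L, Tendsto f (𝓝[≠] z₀) (𝓝 L))
    (hper : ∀ l, InLattice τ l → ∀ z₀, ∀ᶠ z in 𝓝[≠] z₀, f (z + l) = f z)
    {q : ℂ} (hq : Tendsto f (𝓝[≠] q) (𝓝 0)) {z : ℂ} (hz : ContinuousAt f z) : f z = 0 := by
  choose g hg using hlim
  have hgf : ∀ z, ContinuousAt f z → g z = f z := fun z hz =>
    tendsto_nhds_unique (hg z) (hz.tendsto.mono_left nhdsWithin_le_nhds)
  have hgd : Differentiable ℂ g := by
    intro z₀
    have hcont : ContinuousAt (Function.update f z₀ (g z₀)) z₀ :=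
      continuousAt_update_same.2 (hg z₀)
    have hd : ∀ᶠ z in 𝓝[≠] z₀, DifferentiableAt ℂ (Function.update f z₀ (g z₀)) z := by
      filter_upwards [hdiff z₀, self_mem_nhdsWithin] with z hz hne
      refine hz.congr_of_eventuallyEq ?_
      filter_upwards [isOpen_ne.mem_nhds hne] with y hy
      exact Function.update_of_ne hy _ _
    have han := Complex.analyticAt_of_differentiable_on_punctured_nhds_of_continuousAt hd hcont
    refine han.differentiableAt.congr_of_eventuallyEq ?_
    have : ∀ᶠ z in 𝓝[≠] z₀, g z = Function.update f z₀ (g z₀) z := by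
      filter_upwards [hdiff z₀, self_mem_nhdsWithin] with z hz hne
      rw [Function.update_of_ne hne, hgf z hz.continuousAt]
    rw [eventually_nhdsWithin_iff] at this
    filter_upwards [this] with y hy
    by_cases h : y = z₀
    · subst h
      simp
    · exact hy h
  have hgper : ∀ l, InLattice τ l → ∀ z, g (z + l) = g z := by
    intro l hl z
    exact tendsto_nhds_unique (((hg (z + l)).comp (tendsto_add_punctured z l)).congr' (hper l hl z)) (hg z)
  have hbdd : Bornology.IsBounded (Set.range g) := by
    have hcpt : IsCompact ((fun v : ℝ × ℝ => g ((v.1 : ℂ) + v.2 * τ)) ''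
        (Set.Icc 0 1 ×ˢ Set.Icc 0 1)) :=
      (isCompact_Icc.prod isCompact_Icc).image (hgd.continuous.comp (by fun_prop))
    refine hcpt.isBounded.subset ?_
    rintro _ ⟨z, rfl⟩
    obtain ⟨l, hl, x, hx, y, hy, rfl⟩ := exists_inLattice_sub_mem hτ z
    exact ⟨(x, y), ⟨hx, hy⟩, (hgper l hl _).symm⟩
  rw [← hgf z hz, hgd.apply_eq_apply_of_bounded hbdd z q]
  exact tendsto_nhds_unique (hg q) hq

/-- The potential along the family of parameters. -/
def pot (n : Fin 4 → ℂ) (zeta : ℂ → ℂ → ℂ) (p A B : ℂ → ℂ) (t z : ℂ) : ℂ :=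
  Ipot n zeta (A t) (B t) (p t) t z

/-- The function `Ω` along the family of parameters. -/
def drift (zeta : ℂ → ℂ → ℂ) (eta1 p : ℂ → ℂ) (t z : ℂ) : ℂ :=
  -Complex.I / (4 * (Real.pi : ℂ)) * (zeta t (z - p t) + zeta t (z + p t) - 2 * z * eta1 t)

/-- Points off the singular set of `pot`. -/
structure IsRegularPoint (p : ℂ → ℂ) (t z : ℂ) : Prop where
  sub : ¬ InLattice t (z - p t)
  add : ¬ InLattice t (z + p t)
  half : ∀ k : Fin 4, ¬ InLattice t (z + halfp t k / 2)

/-- The standing assumptions on the family `(p, A, B)` near a parameter `τ`. -/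
structure IsLameFamily (n : Fin 4 → ℂ) (zeta : ℂ → ℂ → ℂ) (eta1 p A B : ℂ → ℂ) (τ : ℂ) :
    Prop where
  isZeta : IsWeierstrassZeta zeta
  isEta1 : IsEta1 zeta eta1
  im_pos : 0 < τ.im
  analytic_p : AnalyticAt ℂ p τ
  analytic_A : AnalyticAt ℂ A τ
  two_mul : ¬ InLattice τ (2 * p τ)
  half : ∀ k : Fin 4, ¬ InLattice τ (p τ + halfp τ k / 2)
  B_eq : ∀ t, B t = A t ^ 2 - zeta t (2 * p t) * A t - (3 / 4) * wp t (2 * p t)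
      - ∑ k : Fin 4, n k * (n k + 1) * wp t (p t + halfp t k / 2)

section Smoothness

variable {zeta : ℂ → ℂ → ℂ} {u : ℂ × ℂ → ℂ} {x : ℂ × ℂ} {m : ℕ}

theorem contDiffAt_wp_comp (hx : 0 < x.1.im) (hu : ContDiffAt ℂ m u x)
    (h : ¬ InLattice x.1 (u x)) : ContDiffAt ℂ m (fun y => wp y.1 (u y)) x := by
  have h1 := contDiffAt_wp hx h m
  have h2 : ContDiffAt ℂ m (fun y : ℂ × ℂ => (y.1, u y)) x := contDiffAt_fst.prodMk hu
  generalize wp = P at h1 ⊢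
  exact ContDiffAt.comp (g := fun y : ℂ × ℂ => P y.1 y.2) x h1 h2

theorem contDiffAt_zeta_comp (hzeta : IsWeierstrassZeta zeta) (hx : 0 < x.1.im)
    (hu : ContDiffAt ℂ m u x) (h : ¬ InLattice x.1 (u x)) :
    ContDiffAt ℂ m (fun y => zeta y.1 (u y)) x :=
  ContDiffAt.comp (g := fun y : ℂ × ℂ => zeta y.1 y.2) x (contDiffAt_zeta hzeta hx h m)
    (contDiffAt_fst.prodMk hu)

theorem eventually_not_inLattice_comp (hx : 0 < x.1.im) (hu : ContinuousAt u x)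
    (h : ¬ InLattice x.1 (u x)) : ∀ᶠ y in 𝓝 x, ¬ InLattice y.1 (u y) := by
  have h1 := eventually_offPeriods (offPeriods_of_not_inLattice hx h)
  have h2 : Tendsto (fun y : ℂ × ℂ => (y.1, u y)) (𝓝 x) (𝓝 (x.1, u x)) :=
    continuousAt_fst.prodMk hu
  filter_upwards [h2.eventually h1, hu.eventually_ne (ne_zero_of_not_inLattice h)] with y hy hy0
  exact not_inLattice_of_offPeriods hy hy0

theorem contDiff_halfp (k : Fin 4) : ContDiff ℂ m (fun t => halfp t k) := by
  fin_cases k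
  · exact contDiff_const
  · exact contDiff_const
  · exact contDiff_id
  · exact contDiff_const.add contDiff_id

theorem contDiff_halfp_fst (k : Fin 4) : ContDiff ℂ m (fun y : ℂ × ℂ => halfp y.1 k / 2) :=
  ((contDiff_halfp k).comp contDiff_fst).div_const 2

theorem inLattice_halfp (t : ℂ) (k : Fin 4) : InLattice t (halfp t k) := by
  fin_cases k
  · exact ⟨0, 0, by simp [halfp]⟩
  · exact inLattice_one t
  · exact inLattice_self t
  · exact (inLattice_one t).add (inLattice_self t)

end Smoothness

namespace IsLameFamily

variable {n : Fin 4 → ℂ} {zeta : ℂ → ℂ → ℂ} {eta1 p A B : ℂ → ℂ} {τ : ℂ}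

theorem contDiffAt_p_fst (h : IsLameFamily n zeta eta1 p A B τ) (z : ℂ) :
    ContDiffAt ℂ 2 (fun y : ℂ × ℂ => p y.1) (τ, z) :=
  h.analytic_p.contDiffAt.comp (τ, z) contDiffAt_fst

theorem contDiffAt_A_fst (h : IsLameFamily n zeta eta1 p A B τ) (z : ℂ) :
    ContDiffAt ℂ 2 (fun y : ℂ × ℂ => A y.1) (τ, z) :=
  h.analytic_A.contDiffAt.comp (τ, z) contDiffAt_fst

theorem contDiffAt_B_fst (h : IsLameFamily n zeta eta1 p A B τ) (z : ℂ) :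
    ContDiffAt ℂ 2 (fun y : ℂ × ℂ => B y.1) (τ, z) := by
  have hp := h.contDiffAt_p_fst z
  have hA := h.contDiffAt_A_fst z
  have h2p := contDiffAt_const (c := (2 : ℂ)) |>.mul hp
  have hx : 0 < ((τ, z) : ℂ × ℂ).1.im := h.im_pos
  simp only [h.B_eq]
  exact (((hA.pow 2).sub ((contDiffAt_zeta_comp (m := 2) h.isZeta hx h2p h.two_mul).mul hA)).sub
    (contDiffAt_const.mul (contDiffAt_wp_comp (m := 2) hx h2p h.two_mul))).sub
    (ContDiffAt.sum fun k _ => contDiffAt_const.mul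
      (contDiffAt_wp_comp (m := 2) hx (hp.add (contDiff_halfp_fst k).contDiffAt) (h.half k)))

theorem contDiffAt_pot (h : IsLameFamily n zeta eta1 p A B τ) {z : ℂ}
    (hz : IsRegularPoint p τ z) :
    ContDiffAt ℂ 2 (fun y : ℂ × ℂ => pot n zeta p A B y.1 y.2) (τ, z) := by
  have hp := h.contDiffAt_p_fst z
  have hA := h.contDiffAt_A_fst z
  have hB := h.contDiffAt_B_fst z
  have hx : 0 < ((τ, z) : ℂ × ℂ).1.im := h.im_pos
  have hadd := contDiffAt_snd.add hp
  have hsub := contDiffAt_snd.sub hp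
  simp only [pot, Ipot]
  exact (((ContDiffAt.sum fun k _ => contDiffAt_const.mul (contDiffAt_wp_comp (m := 2) hx
    (contDiffAt_snd.add (contDiff_halfp_fst k).contDiffAt) (hz.half k))).add
    (contDiffAt_const.mul ((contDiffAt_wp_comp (m := 2) hx hadd hz.add).add
      (contDiffAt_wp_comp (m := 2) hx hsub hz.sub)))).add
    (hA.mul ((contDiffAt_zeta_comp (m := 2) h.isZeta hx hadd hz.add).sub
      (contDiffAt_zeta_comp (m := 2) h.isZeta hx hsub hz.sub)))).add hB

theorem eventually_isRegularPoint (h : IsLameFamily n zeta eta1 p A B τ) {z : ℂ}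
    (hz : IsRegularPoint p τ z) : ∀ᶠ y in 𝓝 (τ, z), IsRegularPoint p y.1 y.2 := by
  have hp := (h.contDiffAt_p_fst z).continuousAt
  have hx : 0 < ((τ, z) : ℂ × ℂ).1.im := h.im_pos
  have h3 := eventually_all.2 fun k => eventually_not_inLattice_comp hx
    (continuousAt_snd.add (contDiff_halfp_fst (m := 0) k).continuous.continuousAt) (hz.half k)
  filter_upwards [eventually_not_inLattice_comp hx (continuousAt_snd.add hp) hz.add,
    eventually_not_inLattice_comp hx (continuousAt_snd.sub hp) hz.sub, h3] with y h1 h2 h3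
  exact ⟨h2, h1, h3⟩

theorem eventually_isRegularPoint_right (h : IsLameFamily n zeta eta1 p A B τ) {z : ℂ}
    (hz : IsRegularPoint p τ z) : ∀ᶠ y in 𝓝 z, IsRegularPoint p τ y :=
  (tendsto_mk_right τ z).eventually (h.eventually_isRegularPoint hz)

theorem eventually_im_pos (h : IsLameFamily n zeta eta1 p A B τ) : ∀ᶠ t in 𝓝 τ, 0 < t.im :=
  continuous_im.continuousAt.eventually_const_lt h.im_pos

theorem eventually_isRegularPoint_punctured (h : IsLameFamily n zeta eta1 p A B τ) (z : ℂ) :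
    ∀ᶠ y in 𝓝[≠] z, IsRegularPoint p τ y := by
  have hadd : ∀ a : ℂ, ∀ᶠ y in 𝓝[≠] z, ¬ InLattice τ (y + a) := by
    intro a
    exact (tendsto_add_punctured z a).eventually (eventually_not_inLattice h.im_pos (z + a))
  filter_upwards [hadd (-p τ), hadd (p τ), eventually_all.2 fun k => hadd (halfp τ k / 2)]
    with y h1 h2 h3
  exact ⟨by rwa [sub_eq_add_neg], h2, h3⟩

theorem analyticAt_drift (h : IsLameFamily n zeta eta1 p A B τ) {z : ℂ}
    (h1 : ¬ InLattice τ (z - p τ)) (h2 : ¬ InLattice τ (z + p τ)) :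
    AnalyticAt ℂ (drift zeta eta1 p τ) z := by
  rw [Complex.analyticAt_iff_eventually_differentiableAt]
  have h3 : ∀ᶠ y in 𝓝 z, ¬ InLattice τ (y - p τ) :=
    ((continuous_sub_right (p τ)).tendsto z).eventually
      ((isOpen_not_inLattice h.im_pos).mem_nhds h1)
  have h4 : ∀ᶠ y in 𝓝 z, ¬ InLattice τ (y + p τ) :=
    ((continuous_add_const (p τ)).tendsto z).eventually
      ((isOpen_not_inLattice h.im_pos).mem_nhds h2)
  filter_upwards [h3, h4] with y h3 h4
  have hd := (h.isZeta τ h.im_pos).2.1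
  exact ((((hd _ h3).comp_sub_const y (p τ)).fun_add ((hd _ h4).comp_add_const y (p τ))).fun_sub
    (((hasDerivAt_id' y).const_mul 2).mul_const (eta1 τ))).const_mul _ |>.differentiableAt

theorem differentiableAt_defect (h : IsLameFamily n zeta eta1 p A B τ) {z : ℂ}
    (hz : IsRegularPoint p τ z) :
    DifferentiableAt ℂ (defect (pot n zeta p A B) (drift zeta eta1 p τ) τ) z := by
  have hW := h.analyticAt_drift hz.sub hz.add
  have hJ := h.contDiffAt_pot hz
  have hmk : ContDiffAt ℂ 2 (fun y : ℂ => (τ, y)) z := contDiffAt_const.prodMk contDiffAt_id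
  have hJz : ContDiffAt ℂ 2 (pot n zeta p A B τ) z := hJ.comp z hmk
  have hfd := hJ.fderiv_right (m := 1) (by norm_num)
  have hd : ∀ v : ℂ × ℂ, DifferentiableAt ℂ
      (fun y => fderiv ℂ (fun y : ℂ × ℂ => pot n zeta p A B y.1 y.2) (τ, y) v) z := fun v =>
    ((hfd.comp z (hmk.of_le (by norm_num))).clm_apply contDiffAt_const).differentiableAt (by simp)
  have hev : ∀ᶠ y in 𝓝 z, DifferentiableAt ℂ (fun y : ℂ × ℂ => pot n zeta p A B y.1 y.2) (τ, y) :=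
    (tendsto_mk_right τ z).eventually
      ((hJ.eventually (by simp)).mono fun x hx => hx.differentiableAt (by simp))
  have hright : DifferentiableAt ℂ (deriv (pot n zeta p A B τ)) z :=
    (hd (0, 1)).congr_of_eventuallyEq (hev.mono fun y hy => (hasDerivAt_mk_right hy).deriv)
  have hleft : DifferentiableAt ℂ (fun y => deriv (fun t => pot n zeta p A B t y) τ) z :=
    (hd (1, 0)).congr_of_eventuallyEq (hev.mono fun y hy => (hasDerivAt_mk_left hy).deriv)
  exact ((hW.deriv.deriv.deriv.differentiableAt.sub
    (((hJz.differentiableAt (by simp)).const_mul 4).mul hW.deriv.differentiableAt)).sub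
    ((hright.const_mul 2).mul hW.differentiableAt)).add (hleft.const_mul 2)

end IsLameFamily

end

noncomputable section

section DefectSymmetry

variable {J : ℂ → ℂ → ℂ} {W : ℂ → ℂ} {τ z : ℂ}

theorem defect_neg (hW : ∀ z, W (-z) = -W z) (hJ : ∀ᶠ t in 𝓝 τ, ∀ z, J t (-z) = J t z) (z : ℂ) :
    defect J W τ (-z) = defect J W τ z := by
  have hJτ := hJ.self_of_nhds
  have h1 : ∀ z, deriv W (-z) = deriv W z := by
    intro z
    have h : deriv (fun z => W (-z)) z = deriv (fun z => -W z) z := by simp only [hW]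
    rw [deriv_comp_neg, deriv.fun_neg] at h
    exact neg_injective h
  have h2 : ∀ z, deriv (deriv W) (-z) = -deriv (deriv W) z := by
    intro z
    have h : deriv (fun z => deriv W (-z)) z = deriv (deriv W) z := by simp only [h1]
    rw [deriv_comp_neg] at h
    rw [← h, neg_neg]
  have h3 : deriv (deriv (deriv W)) (-z) = deriv (deriv (deriv W)) z := by
    have h : deriv (fun z => deriv (deriv W) (-z)) z = deriv (fun z => -deriv (deriv W) z) z := by
      simp only [h2]
    rw [deriv_comp_neg, deriv.fun_neg] at h
    exact neg_injective h
  have h4 : deriv (J τ) (-z) = -deriv (J τ) z := by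
    have h : deriv (fun z => J τ (-z)) z = deriv (J τ) z := by simp only [hJτ]
    rw [deriv_comp_neg] at h
    rw [← h, neg_neg]
  have h5 : deriv (fun t => J t (-z)) τ = deriv (fun t => J t z) τ :=
    EventuallyEq.deriv_eq (hJ.mono fun t ht => ht z)
  rw [defect, defect, h1, h3, h4, h5, hJτ, hW]
  ring

theorem deriv_shift_eq {f : ℂ → ℂ} {l k z : ℂ} (h : ∀ᶠ y in 𝓝 z, f (y + l) = f y - k) :
    ∀ᶠ y in 𝓝 z, deriv f (y + l) = deriv f y := by
  filter_upwards [h.eventually_nhds] with y hy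
  rw [← deriv_comp_add_const, EventuallyEq.deriv_eq hy, deriv_sub_const]

theorem deriv_deriv_deriv_shift_eq {f : ℂ → ℂ} {l k z : ℂ}
    (h : ∀ᶠ y in 𝓝 z, f (y + l) = f y - k) :
    deriv (deriv (deriv f)) (z + l) = deriv (deriv (deriv f)) z := by
  have h1 := deriv_shift_eq h
  have h2 := deriv_shift_eq (f := deriv f) (l := l) (k := 0) (h1.mono fun y hy => by rw [hy, sub_zero])
  exact (deriv_shift_eq (f := deriv (deriv f)) (l := l) (k := 0)
    (h2.mono fun y hy => by rw [hy, sub_zero])).self_of_nhds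

theorem defect_add_one (hW : ∀ᶠ y in 𝓝 z, W (y + 1) = W y)
    (hJ : ∀ᶠ x in 𝓝 (τ, z), J x.1 (x.2 + 1) = J x.1 x.2) :
    defect J W τ (z + 1) = defect J W τ z := by
  have hW' : ∀ᶠ y in 𝓝 z, W (y + 1) = W y - 0 := hW.mono fun y hy => by rw [hy, sub_zero]
  have hJz : ∀ᶠ y in 𝓝 z, J τ (y + 1) = J τ y - 0 :=
    ((tendsto_mk_right τ z).eventually hJ).mono fun y hy => by rw [hy, sub_zero]
  have hJt : ∀ᶠ t in 𝓝 τ, J t (z + 1) = J t z :=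
    ((continuous_id.prodMk continuous_const).tendsto τ).eventually hJ
  rw [defect, defect, deriv_deriv_deriv_shift_eq hW', (deriv_shift_eq hW').self_of_nhds,
    hW.self_of_nhds, (deriv_shift_eq hJz).self_of_nhds, hJ.self_of_nhds, EventuallyEq.deriv_eq hJt]

theorem defect_add_tau (hW : ∀ᶠ y in 𝓝 z, W (y + τ) = W y - 1)
    (hJ : ∀ᶠ x in 𝓝 (τ, z), J x.1 (x.2 + x.1) = J x.1 x.2)
    (hJd : DifferentiableAt ℂ (fun x : ℂ × ℂ => J x.1 x.2) (τ, z)) :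
    defect J W τ (z + τ) = defect J W τ z := by
  have hJz : ∀ᶠ y in 𝓝 z, J τ (y + τ) = J τ y - 0 :=
    ((tendsto_mk_right τ z).eventually hJ).mono fun y hy => by rw [hy, sub_zero]
  have hq : HasDerivAt (fun t => z + τ - t) (-1) τ := by
    simpa using! (hasDerivAt_id' τ).const_sub (z + τ)
  have hq0 : z + τ - τ = z := by ring
  have hJt : ∀ᶠ t in 𝓝 τ, J t (z + τ) = J t (z + τ - t) := by
    have hlim : Tendsto (fun t => (t, z + τ - t)) (𝓝 τ) (𝓝 (τ, z)) := by
      have := (continuous_id.prodMk (continuous_const.sub continuous_id)).tendsto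
        (f := fun t : ℂ => (t, z + τ - t)) τ
      rwa [hq0] at this
    filter_upwards [hlim.eventually hJ] with t ht
    rw [← ht]
    congr 1
    ring
  have hright := (hasDerivAt_mk_right hJd).deriv
  have hleft := (hasDerivAt_mk_left hJd).deriv
  have halong := (hasDerivAt_along hJd hq hq0).deriv
  beta_reduce at hright hleft halong
  rw [defect, defect, deriv_deriv_deriv_shift_eq hW, (deriv_shift_eq hW).self_of_nhds,
    hW.self_of_nhds, (deriv_shift_eq hJz).self_of_nhds, hJ.self_of_nhds,
    EventuallyEq.deriv_eq hJt, halong, hleft]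
  change deriv (J τ) z = _ at hright
  rw [hright]
  ring

end DefectSymmetry

section Periodicity

variable {n : Fin 4 → ℂ} {zeta : ℂ → ℂ → ℂ} {eta1 p A B : ℂ → ℂ} {τ z : ℂ}

theorem isRegularPoint_add_iff {l : ℂ} (hl : InLattice τ l) :
    IsRegularPoint p τ (z + l) ↔ IsRegularPoint p τ z := by
  have h : ∀ a : ℂ, InLattice τ (z + l + a) ↔ InLattice τ (z + a) := by
    intro a
    rw [add_right_comm, inLattice_add_iff hl]
  constructor
  · rintro ⟨h1, h2, h3⟩
    rw [sub_eq_add_neg, h] at h1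
    exact ⟨by rwa [sub_eq_add_neg], by rwa [h] at h2, fun k => by simpa only [h] using h3 k⟩
  · rintro ⟨h1, h2, h3⟩
    refine ⟨?_, by rwa [h], fun k => by simpa only [h] using h3 k⟩
    rw [sub_eq_add_neg, h]
    rwa [sub_eq_add_neg] at h1

theorem drift_neg (hzeta : IsWeierstrassZeta zeta) (hτ : 0 < τ.im) (z : ℂ) :
    drift zeta eta1 p τ (-z) = -drift zeta eta1 p τ z := by
  have h := (hzeta τ hτ).1
  rw [drift, drift, show -z - p τ = -(z + p τ) by ring, show -z + p τ = -(z - p τ) by ring, h, h]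
  ring

theorem drift_add_one (heta1 : IsEta1 zeta eta1) (hτ : 0 < τ.im) (h1 : ¬ InLattice τ (z - p τ))
    (h2 : ¬ InLattice τ (z + p τ)) :
    drift zeta eta1 p τ (z + 1) = drift zeta eta1 p τ z := by
  rw [drift, drift, show z + 1 - p τ = z - p τ + 1 by ring, show z + 1 + p τ = z + p τ + 1 by ring]
  linear_combination I / (4 * Real.pi) * (heta1 τ hτ _ h1 + heta1 τ hτ _ h2)

theorem drift_add_tau (hzeta : IsWeierstrassZeta zeta) (heta1 : IsEta1 zeta eta1) (hτ : 0 < τ.im)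
    (h1 : ¬ InLattice τ (z - p τ)) (h2 : ¬ InLattice τ (z + p τ)) :
    drift zeta eta1 p τ (z + τ) = drift zeta eta1 p τ z - 1 := by
  have hpi : (Real.pi : ℂ) ≠ 0 := by exact_mod_cast Real.pi_ne_zero
  rw [drift, drift, show z + τ - p τ = z - p τ + τ by ring, show z + τ + p τ = z + p τ + τ by ring,
    zeta_add_tau hzeta heta1 hτ h1, zeta_add_tau hzeta heta1 hτ h2]
  field_simp
  linear_combination (4 * Real.pi : ℂ) * I_sq

theorem pot_neg (hzeta : IsWeierstrassZeta zeta) (hτ : 0 < τ.im) (z : ℂ) :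
    pot n zeta p A B τ (-z) = pot n zeta p A B τ z := by
  have h := (hzeta τ hτ).1
  have h1 : ∀ k, wp τ (-z + halfp τ k / 2) = wp τ (z + halfp τ k / 2) := by
    intro k
    rw [← wp_neg hτ, ← wp_add_of_inLattice hτ (inLattice_halfp τ k)]
    congr 1
    ring
  simp only [pot, Ipot, h1]
  rw [show -z - p τ = -(z + p τ) by ring, show -z + p τ = -(z - p τ) by ring, h, h, wp_neg hτ,
    wp_neg hτ]
  ring

theorem pot_add_of_quasiPeriod {l η : ℂ} (hτ : 0 < τ.im) (hl : InLattice τ l)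
    (hη : ∀ z, ¬ InLattice τ z → zeta τ (z + l) = zeta τ z + η) (hz : IsRegularPoint p τ z) :
    pot n zeta p A B τ (z + l) = pot n zeta p A B τ z := by
  simp only [pot, Ipot, add_right_comm z l, add_sub_right_comm z l, wp_add_of_inLattice hτ hl,
    hη _ hz.add, hη _ hz.sub]
  ring

theorem pot_add_one (heta1 : IsEta1 zeta eta1) (hτ : 0 < τ.im) (hz : IsRegularPoint p τ z) :
    pot n zeta p A B τ (z + 1) = pot n zeta p A B τ z :=
  pot_add_of_quasiPeriod (η := eta1 τ) hτ (inLattice_one τ)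
    (fun y hy => by rw [heta1 τ hτ y hy]; ring) hz

theorem pot_add_tau (hzeta : IsWeierstrassZeta zeta) (heta1 : IsEta1 zeta eta1) (hτ : 0 < τ.im)
    (hz : IsRegularPoint p τ z) : pot n zeta p A B τ (z + τ) = pot n zeta p A B τ z :=
  pot_add_of_quasiPeriod (η := τ * eta1 τ - 2 * Real.pi * I) hτ (inLattice_self τ)
    (fun y hy => by rw [zeta_add_tau hzeta heta1 hτ hy]; ring) hz

end Periodicity

namespace IsLameFamily

variable {n : Fin 4 → ℂ} {zeta : ℂ → ℂ → ℂ} {eta1 p A B : ℂ → ℂ} {τ z : ℂ}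

theorem defect_neg (h : IsLameFamily n zeta eta1 p A B τ) (z : ℂ) :
    defect (pot n zeta p A B) (drift zeta eta1 p τ) τ (-z) =
      defect (pot n zeta p A B) (drift zeta eta1 p τ) τ z :=
  _root_.defect_neg (drift_neg h.isZeta h.im_pos)
    (h.eventually_im_pos.mono fun _ ht => pot_neg h.isZeta ht) z

theorem eventually_im_pos_fst (h : IsLameFamily n zeta eta1 p A B τ) (z : ℂ) :
    ∀ᶠ x : ℂ × ℂ in 𝓝 (τ, z), 0 < x.1.im :=
  (continuous_fst.tendsto (τ, z)).eventually h.eventually_im_pos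

theorem defect_add_one (h : IsLameFamily n zeta eta1 p A B τ) (hz : IsRegularPoint p τ z) :
    defect (pot n zeta p A B) (drift zeta eta1 p τ) τ (z + 1) =
      defect (pot n zeta p A B) (drift zeta eta1 p τ) τ z := by
  refine _root_.defect_add_one ?_ ?_
  · filter_upwards [h.eventually_isRegularPoint_right hz] with y hy
    exact drift_add_one h.isEta1 h.im_pos hy.sub hy.add
  · filter_upwards [h.eventually_isRegularPoint hz, h.eventually_im_pos_fst z] with x hx ht
    exact pot_add_one h.isEta1 ht hx

theorem defect_add_tau (h : IsLameFamily n zeta eta1 p A B τ) (hz : IsRegularPoint p τ z) :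
    defect (pot n zeta p A B) (drift zeta eta1 p τ) τ (z + τ) =
      defect (pot n zeta p A B) (drift zeta eta1 p τ) τ z := by
  refine _root_.defect_add_tau ?_ ?_ ((h.contDiffAt_pot hz).differentiableAt (by simp))
  · filter_upwards [h.eventually_isRegularPoint_right hz] with y hy
    exact drift_add_tau h.isZeta h.isEta1 h.im_pos hy.sub hy.add
  · filter_upwards [h.eventually_isRegularPoint hz, h.eventually_im_pos_fst z] with x hx ht
    exact pot_add_tau h.isZeta h.isEta1 ht hx

theorem defect_add_of_inLattice (h : IsLameFamily n zeta eta1 p A B τ) {l : ℂ}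
    (hl : InLattice τ l) (hz : IsRegularPoint p τ z) :
    defect (pot n zeta p A B) (drift zeta eta1 p τ) τ (z + l) =
      defect (pot n zeta p A B) (drift zeta eta1 p τ) τ z := by
  set D := defect (pot n zeta p A B) (drift zeta eta1 p τ) τ with hD
  have hstep : ∀ e : ℂ, InLattice τ e →
      (∀ z, IsRegularPoint p τ z → D (z + e) = D z) → ∀ m : ℤ, ∀ z, IsRegularPoint p τ z →
      D (z + m * e) = D z ∧ IsRegularPoint p τ (z + m * e) := by
    intro e he hper m
    induction m with
    | zero =>
      intro z hz
      simpa using hz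
    | succ i ih =>
      intro z hz
      obtain ⟨h1, h2⟩ := ih z hz
      have : z + ((i : ℤ) + 1 : ℤ) * e = z + (i : ℤ) * e + e := by
        push_cast
        ring
      rw [this, hper _ h2, isRegularPoint_add_iff he]
      exact ⟨h1, h2⟩
    | pred i ih =>
      intro z hz
      obtain ⟨h1, h2⟩ := ih z hz
      have : z + (-(i : ℤ) : ℤ) * e = z + (-(i : ℤ) - 1 : ℤ) * e + e := by
        push_cast
        ring
      rw [this, isRegularPoint_add_iff he] at h2
      rw [this, hper _ h2] at h1
      exact ⟨h1, h2⟩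
  obtain ⟨a, b, rfl⟩ := hl
  obtain ⟨h1, h2⟩ := hstep 1 (inLattice_one τ) (fun z hz => h.defect_add_one hz) a z hz
  obtain ⟨h3, -⟩ := hstep τ (inLattice_self τ) (fun z hz => h.defect_add_tau hz) b _ h2
  rw [mul_one] at h1 h3
  rw [← add_assoc, h3, h1]

end IsLameFamily

end

noncomputable section

section RegularParts

variable {zeta : ℂ → ℂ → ℂ} {τ z : ℂ}

theorem hasDerivAt_zeta_sub_inv (hzeta : IsWeierstrassZeta zeta) (h : OffPeriods (τ, z)) :
    HasDerivAt (fun w => zeta τ w - w⁻¹) (-(wp τ z - z⁻¹ ^ 2)) z := by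
  refine (hasDerivAt_zetaReg h).congr_of_eventuallyEq ?_
  filter_upwards [(tendsto_mk_right τ z).eventually (eventually_offPeriods h)] with w hw
  exact zeta_sub_inv_eq_zetaReg hzeta hw

theorem hasDerivAt_wp_sub_inv_sq_zero (hτ : 0 < τ.im) :
    HasDerivAt (fun w => wp τ w - w⁻¹ ^ 2) 0 0 := by
  have h1 : DifferentiableAt ℂ (fun w => wp τ w - w⁻¹ ^ 2) 0 := (hasDerivAt_mk_right
    ((contDiffAt_wp_sub_inv_sq (offPeriods_zero hτ) 1).differentiableAt (by simp))).differentiableAt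
  have h2 : deriv (fun w => wp τ w - w⁻¹ ^ 2) 0 = 0 := by
    have h := deriv_comp_neg (fun w => wp τ w - w⁻¹ ^ 2) 0
    simp only [wp_neg hτ, inv_neg, neg_sq, neg_zero] at h
    exact self_eq_neg.1 h
  exact h1.hasDerivAt.congr_deriv h2

theorem hasDerivAt_wp (hτ : 0 < τ.im) (hz : ¬ InLattice τ z) : HasDerivAt (wp τ) (wpd τ z) z :=
  (hasDerivAt_mk_right
    ((contDiffAt_wp hτ hz 1).differentiableAt (by simp))).differentiableAt.hasDerivAt

theorem hasDerivAt_wp_shift (hτ : 0 < τ.im) {a b : ℂ} (h : ¬ InLattice τ (a + z + b)) :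
    HasDerivAt (fun w => wp τ (a + w + b)) (wpd τ (a + z + b)) z := by
  simp only [add_assoc] at h ⊢
  exact ((hasDerivAt_wp hτ h).comp_const_add a (z + b)).comp_add_const z b

theorem hasDerivAt_zeta_shift (hzeta : IsWeierstrassZeta zeta) (hτ : 0 < τ.im) {a b : ℂ}
    (h : ¬ InLattice τ (a + z + b)) :
    HasDerivAt (fun w => zeta τ (a + w + b)) (-wp τ (a + z + b)) z := by
  simp only [add_assoc] at h ⊢
  exact (((hzeta τ hτ).2.1 _ h).comp_const_add a (z + b)).comp_add_const z b

end RegularParts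

namespace IsLameFamily

variable {n : Fin 4 → ℂ} {zeta : ℂ → ℂ → ℂ} {eta1 p A B : ℂ → ℂ} {τ z : ℂ}

/-- The regular part of `pot` at `z = p`, in the moving coordinate `w = z - p`. -/
def regularPot (n : Fin 4 → ℂ) (zeta : ℂ → ℂ → ℂ) (p A B : ℂ → ℂ) (y : ℂ × ℂ) : ℂ :=
  (∑ k : Fin 4, n k * (n k + 1) * wp y.1 (p y.1 + y.2 + halfp y.1 k / 2))
    + (3 / 4) * (wp y.1 (p y.1 + y.2 + p y.1) + (wp y.1 y.2 - y.2⁻¹ ^ 2))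
    + A y.1 * (zeta y.1 (p y.1 + y.2 + p y.1) - (zeta y.1 y.2 - y.2⁻¹)) + B y.1

/-- The regular part of `drift` at `z = p`, in the coordinate `w = z - p`. -/
def regularDrift (zeta : ℂ → ℂ → ℂ) (eta1 p : ℂ → ℂ) (τ w : ℂ) : ℂ :=
  -Complex.I / (4 * (Real.pi : ℂ)) *
    ((zeta τ w - w⁻¹) + zeta τ (p τ + w + p τ) - 2 * (p τ + w) * eta1 τ)

theorem pot_at_p (t w : ℂ) : pot n zeta p A B t (p t + w) =
    3 / 4 * w⁻¹ ^ 2 + (fun t => -A t) t * w⁻¹ + regularPot n zeta p A B (t, w) := by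
  rw [pot, Ipot, regularPot, add_sub_cancel_left]
  ring

theorem drift_at_p (w : ℂ) : drift zeta eta1 p τ (p τ + w) =
    -Complex.I / (4 * (Real.pi : ℂ)) * w⁻¹ + regularDrift zeta eta1 p τ w := by
  rw [drift, regularDrift, add_sub_cancel_left]
  ring

theorem not_inLattice_p_add_p (h : IsLameFamily n zeta eta1 p A B τ) :
    ¬ InLattice τ (p τ + 0 + p τ) := by
  rw [add_zero, ← _root_.two_mul]
  exact h.two_mul

theorem not_inLattice_p_add_half (h : IsLameFamily n zeta eta1 p A B τ) (k : Fin 4) :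
    ¬ InLattice τ (p τ + 0 + halfp τ k / 2) := by
  rw [add_zero]
  exact h.half k

theorem contDiffAt_regularPot (h : IsLameFamily n zeta eta1 p A B τ) :
    ContDiffAt ℂ 2 (regularPot n zeta p A B) (τ, 0) := by
  have hp := h.contDiffAt_p_fst 0
  have hA := h.contDiffAt_A_fst 0
  have hB := h.contDiffAt_B_fst 0
  have hx : 0 < ((τ, 0) : ℂ × ℂ).1.im := h.im_pos
  have hpp := (hp.add contDiffAt_snd).add hp
  exact (((ContDiffAt.sum fun k _ => contDiffAt_const.mul (contDiffAt_wp_comp (m := 2) hx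
    ((hp.add contDiffAt_snd).add (contDiff_halfp_fst k).contDiffAt)
    (h.not_inLattice_p_add_half k))).add
    (contDiffAt_const.mul ((contDiffAt_wp_comp (m := 2) hx hpp h.not_inLattice_p_add_p).add
      (contDiffAt_wp_sub_inv_sq (offPeriods_zero h.im_pos) 2)))).add
    (hA.mul ((contDiffAt_zeta_comp (m := 2) h.isZeta hx hpp h.not_inLattice_p_add_p).sub
      (contDiffAt_zeta_sub_inv h.isZeta (offPeriods_zero h.im_pos) 2)))).add hB

theorem regularPot_zero (h : IsLameFamily n zeta eta1 p A B τ) {t : ℂ} (ht : 0 < t.im) :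
    regularPot n zeta p A B (t, 0) = A t ^ 2 := by
  have h0 : zeta t 0 = 0 := by
    have := (h.isZeta t ht).1 0
    rw [neg_zero] at this
    exact self_eq_neg.1 this
  simp only [regularPot, h.B_eq, h0, wp_zero, add_zero, ← _root_.two_mul, inv_zero]
  ring

theorem fderiv_regularPot_left (h : IsLameFamily n zeta eta1 p A B τ) :
    fderiv ℂ (regularPot n zeta p A B) (τ, 0) (1, 0) = 2 * A τ * deriv A τ := by
  have h1 := hasDerivAt_mk_left (h.contDiffAt_regularPot.differentiableAt (by simp))
  have h2 : (fun t => regularPot n zeta p A B (t, 0)) =ᶠ[𝓝 τ] fun t => A t ^ 2 :=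
    h.eventually_im_pos.mono fun t ht => h.regularPot_zero ht
  rw [← h1.deriv, h2.deriv_eq, (h.analytic_A.differentiableAt.hasDerivAt.fun_pow 2).deriv]
  simp

theorem fderiv_regularPot_right (h : IsLameFamily n zeta eta1 p A B τ) :
    fderiv ℂ (regularPot n zeta p A B) (τ, 0) (0, 1) =
      (∑ k : Fin 4, n k * (n k + 1) * wpd τ (p τ + halfp τ k / 2))
        + 3 / 4 * wpd τ (2 * p τ) - A τ * wp τ (2 * p τ) := by
  have h1 := hasDerivAt_mk_right (h.contDiffAt_regularPot.differentiableAt (by simp))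
  have hz := hasDerivAt_zeta_sub_inv h.isZeta (offPeriods_zero h.im_pos)
  have h2 := (((HasDerivAt.fun_sum (u := Finset.univ) fun k _ =>
      (hasDerivAt_wp_shift h.im_pos (h.not_inLattice_p_add_half k)).const_mul
        (n k * (n k + 1))).fun_add
    (((hasDerivAt_wp_shift h.im_pos h.not_inLattice_p_add_p).fun_add
      (hasDerivAt_wp_sub_inv_sq_zero h.im_pos)).const_mul (3 / 4))).fun_add
    (((hasDerivAt_zeta_shift h.isZeta h.im_pos h.not_inLattice_p_add_p).fun_sub hz).const_mul
      (A τ))).add_const (B τ)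
  refine (h1.unique h2).trans ?_
  simp only [add_zero, ← _root_.two_mul, wp_zero, inv_zero]
  ring

theorem eventually_hasDerivAt_regularDrift (h : IsLameFamily n zeta eta1 p A B τ) :
    ∀ᶠ w in 𝓝 (0 : ℂ), HasDerivAt (regularDrift zeta eta1 p τ)
      (-Complex.I / (4 * (Real.pi : ℂ)) *
        (-(wp τ w - w⁻¹ ^ 2) - wp τ (p τ + w + p τ) - 2 * eta1 τ)) w := by
  have h1 : ∀ᶠ w in 𝓝 (0 : ℂ), ¬ InLattice τ (p τ + w + p τ) := by
    have hc : Continuous fun w => p τ + w + p τ := by fun_prop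
    exact (hc.tendsto 0).eventually
      ((isOpen_not_inLattice h.im_pos).mem_nhds h.not_inLattice_p_add_p)
  filter_upwards [h1, (tendsto_mk_right τ 0).eventually
    (eventually_offPeriods (offPeriods_zero h.im_pos))] with w hw hoff
  refine ((((hasDerivAt_zeta_sub_inv h.isZeta hoff).fun_add
    (hasDerivAt_zeta_shift h.isZeta h.im_pos hw)).fun_sub
    ((((hasDerivAt_id' w).const_add (p τ)).const_mul 2).mul_const (eta1 τ))).const_mul
    _).congr_deriv ?_
  ring

theorem analyticAt_regularDrift (h : IsLameFamily n zeta eta1 p A B τ) :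
    AnalyticAt ℂ (regularDrift zeta eta1 p τ) 0 := by
  rw [Complex.analyticAt_iff_eventually_differentiableAt]
  exact h.eventually_hasDerivAt_regularDrift.mono fun w hw => hw.differentiableAt

theorem regularDrift_zero (h : IsLameFamily n zeta eta1 p A B τ) :
    regularDrift zeta eta1 p τ 0 = -Complex.I / (4 * (Real.pi : ℂ)) *
      (zeta τ (2 * p τ) - 2 * p τ * eta1 τ) := by
  have h0 : zeta τ 0 = 0 := by
    have := (h.isZeta τ h.im_pos).1 0
    rw [neg_zero] at this
    exact self_eq_neg.1 this
  simp only [regularDrift, h0, inv_zero, add_zero, ← _root_.two_mul]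
  ring

theorem deriv_regularDrift_zero (h : IsLameFamily n zeta eta1 p A B τ) :
    deriv (regularDrift zeta eta1 p τ) 0 = -Complex.I / (4 * (Real.pi : ℂ)) *
      (-wp τ (2 * p τ) - 2 * eta1 τ) := by
  rw [h.eventually_hasDerivAt_regularDrift.self_of_nhds.deriv]
  simp only [wp_zero, inv_zero, add_zero, ← _root_.two_mul]
  ring

theorem deriv_deriv_regularDrift_zero (h : IsLameFamily n zeta eta1 p A B τ) :
    deriv (deriv (regularDrift zeta eta1 p τ)) 0 = -Complex.I / (4 * (Real.pi : ℂ)) *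
      -wpd τ (2 * p τ) := by
  have h1 : deriv (regularDrift zeta eta1 p τ) =ᶠ[𝓝 0] fun w => -Complex.I / (4 * (Real.pi : ℂ)) *
      (-(wp τ w - w⁻¹ ^ 2) - wp τ (p τ + w + p τ) - 2 * eta1 τ) :=
    h.eventually_hasDerivAt_regularDrift.mono fun w hw => hw.deriv
  have h2 := ((((hasDerivAt_wp_sub_inv_sq_zero h.im_pos).fun_neg).fun_sub
    (hasDerivAt_wp_shift h.im_pos h.not_inLattice_p_add_p)).sub_const (2 * eta1 τ)).const_mul
    (-Complex.I / (4 * (Real.pi : ℂ)))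
  rw [h1.deriv_eq, h2.deriv]
  simp only [add_zero, ← _root_.two_mul]
  ring

/-- Laurent expansion of the defect at `z = p`. -/
theorem exists_defect_expansion_at_p (h : IsLameFamily n zeta eta1 p A B τ) {c C₁ : ℂ}
    (hc : c = -Complex.I / (4 * (Real.pi : ℂ)))
    (hC₁ : C₁ = (∑ k : Fin 4, n k * (n k + 1) * wpd τ (p τ + halfp τ k / 2))
        + 3 / 4 * wpd τ (2 * p τ) - A τ * wp τ (2 * p τ)) :
    ∃ E : ℂ → ℂ,
      Tendsto E (𝓝[≠] 0) (𝓝 (-3 * A τ * c * wpd τ (2 * p τ)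
        + 4 * A τ ^ 2 * c * (wp τ (2 * p τ) + 2 * eta1 τ)
        - 2 * C₁ * (c * (zeta τ (2 * p τ) - 2 * p τ * eta1 τ) + deriv p τ)
        + 4 * A τ * deriv A τ)) ∧
      ∀ᶠ w in 𝓝[≠] (0 : ℂ),
        defect (pot n zeta p A B) (drift zeta eta1 p τ) τ (p τ + w) =
        3 * (deriv p τ - c * (2 * A τ - zeta τ (2 * p τ) + 2 * p τ * eta1 τ)) * w⁻¹ ^ 3
        + (4 * c * A τ ^ 2
          - 2 * A τ * (c * (zeta τ (2 * p τ) - 2 * p τ * eta1 τ) + deriv p τ)) * w⁻¹ ^ 2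
        + (3 / 2 * c * wpd τ (2 * p τ) - 2 * A τ * c * (wp τ (2 * p τ) + 2 * eta1 τ)
          + 2 * c * C₁ - 2 * deriv A τ) * w⁻¹ + E w := by
  obtain ⟨E, hE, hD⟩ := exists_defect_expansion h.contDiffAt_regularPot
    h.analytic_p.differentiableAt.hasDerivAt h.analytic_A.differentiableAt.hasDerivAt.fun_neg
    pot_at_p h.analyticAt_regularDrift (drift_at_p (eta1 := eta1))
  rw [h.regularPot_zero h.im_pos, h.fderiv_regularPot_left, h.fderiv_regularPot_right,
    h.regularDrift_zero, h.deriv_regularDrift_zero, h.deriv_deriv_regularDrift_zero, ← hc, ← hC₁]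
    at hE
  rw [h.regularPot_zero h.im_pos, h.fderiv_regularPot_right,
    h.regularDrift_zero, h.deriv_regularDrift_zero, h.deriv_deriv_regularDrift_zero, ← hc, ← hC₁]
    at hD
  refine ⟨E, hE.trans_eq ?_, hD.mono fun w hw => hw.trans ?_⟩
  · congr 1
    ring
  · ring

end IsLameFamily

end

noncomputable section

/-- The coefficient of `1` in the half-period generator `halfp τ k`. -/
def halfpOne : Fin 4 → ℤ := ![0, 1, 0, 1]

/-- The coefficient of `τ` in the half-period generator `halfp τ k`. -/
def halfpTau : Fin 4 → ℤ := ![0, 0, 1, 1]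

theorem halfp_eq (t : ℂ) (k : Fin 4) : halfp t k = halfpOne k + halfpTau k * t := by
  fin_cases k <;> simp [halfp, halfpOne, halfpTau]

theorem not_inLattice_halfp_sub {τ : ℂ} (hτ : 0 < τ.im) {j k : Fin 4} (hjk : k ≠ j) :
    ¬ InLattice τ (-(halfp τ j / 2) + halfp τ k / 2) := by
  rintro ⟨a, b, h⟩
  rw [halfp_eq, halfp_eq] at h
  have h1 : ((halfpOne k - halfpOne j - 2 * a : ℤ) : ℂ) +
      ((halfpTau k - halfpTau j - 2 * b : ℤ) : ℂ) * τ = 0 := by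
    push_cast
    linear_combination 2 * h
  have hb : halfpTau k - halfpTau j - 2 * b = 0 := by
    have h2 := congrArg Complex.im h1
    rw [add_im, intCast_im, mul_im, intCast_im, intCast_re, zero_mul, zero_add, add_zero,
      zero_im] at h2
    exact_mod_cast (mul_eq_zero.1 h2).resolve_right hτ.ne'
  have ha : halfpOne k - halfpOne j - 2 * a = 0 := by
    rw [hb, Int.cast_zero, zero_mul, add_zero] at h1
    exact_mod_cast h1
  have hp1 : halfpOne k % 2 = halfpOne j % 2 := by omega
  have hp2 : halfpTau k % 2 = halfpTau j % 2 := by omega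
  revert hjk hp1 hp2
  clear h h1 ha hb
  revert j k
  decide

theorem drift_add_halfp {zeta : ℂ → ℂ → ℂ} {eta1 p : ℂ → ℂ} {τ z : ℂ}
    (hzeta : IsWeierstrassZeta zeta) (heta1 : IsEta1 zeta eta1) (hτ : 0 < τ.im)
    (h1 : ¬ InLattice τ (z - p τ)) (h2 : ¬ InLattice τ (z + p τ)) (k : Fin 4) :
    drift zeta eta1 p τ (z + halfp τ k) = drift zeta eta1 p τ z - halfpTau k := by
  fin_cases k
  · simp [halfp, halfpTau]
  · simpa [halfp, halfpTau] using drift_add_one heta1 hτ h1 h2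
  · simpa [halfp, halfpTau] using drift_add_tau hzeta heta1 hτ h1 h2
  · have h3 : ¬ InLattice τ (z + τ - p τ) := by
      rw [add_sub_right_comm]
      exact mt (inLattice_add_iff (inLattice_self τ)).1 h1
    have h4 : ¬ InLattice τ (z + τ + p τ) := by
      rw [add_right_comm]
      exact mt (inLattice_add_iff (inLattice_self τ)).1 h2
    have h5 : z + halfp τ 3 = z + τ + 1 := by
      simp [halfp]
      ring
    change drift zeta eta1 p τ (z + halfp τ 3) = _
    rw [h5, drift_add_one heta1 hτ h3 h4, drift_add_tau hzeta heta1 hτ h1 h2]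
    simp [halfpTau]

namespace IsLameFamily

variable {n : Fin 4 → ℂ} {zeta : ℂ → ℂ → ℂ} {eta1 p A B : ℂ → ℂ} {τ z : ℂ}

/-- The regular part of `pot` at `z = -ω_j / 2`, in the moving coordinate `w = z + ω_j / 2`. -/
def regularPotHalf (n : Fin 4 → ℂ) (zeta : ℂ → ℂ → ℂ) (p A B : ℂ → ℂ) (j : Fin 4) (y : ℂ × ℂ) :
    ℂ :=
  (n j * (n j + 1) * (wp y.1 y.2 - y.2⁻¹ ^ 2) + ∑ k ∈ Finset.univ.erase j,
      n k * (n k + 1) * wp y.1 (-(halfp y.1 j / 2) + y.2 + halfp y.1 k / 2))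
    + (3 / 4) * (wp y.1 (-(halfp y.1 j / 2) + y.2 + p y.1)
      + wp y.1 (-(halfp y.1 j / 2) + y.2 - p y.1))
    + A y.1 * (zeta y.1 (-(halfp y.1 j / 2) + y.2 + p y.1)
      - zeta y.1 (-(halfp y.1 j / 2) + y.2 - p y.1)) + B y.1

theorem pot_at_half (j : Fin 4) (t w : ℂ) : pot n zeta p A B t ((fun t => -(halfp t j / 2)) t + w) =
    n j * (n j + 1) * w⁻¹ ^ 2 + regularPotHalf n zeta p A B j (t, w) := by
  rw [pot, Ipot, regularPotHalf, ← Finset.add_sum_erase _ _ (Finset.mem_univ j)]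
  beta_reduce
  rw [neg_add_cancel_comm]
  ring

theorem not_inLattice_half_add (h : IsLameFamily n zeta eta1 p A B τ) (j : Fin 4) :
    ¬ InLattice τ (-(halfp τ j / 2) + p τ) := by
  have h1 : -(halfp τ j / 2) + p τ = p τ + halfp τ j / 2 + -halfp τ j := by ring
  rw [h1, inLattice_add_iff (inLattice_halfp τ j).neg]
  exact h.half j

theorem not_inLattice_half_sub (h : IsLameFamily n zeta eta1 p A B τ) (j : Fin 4) :
    ¬ InLattice τ (-(halfp τ j / 2) - p τ) := by
  have h1 : -(halfp τ j / 2) - p τ = -(p τ + halfp τ j / 2) := by ring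
  rw [h1, inLattice_neg_iff]
  exact h.half j

theorem contDiffAt_regularPotHalf (h : IsLameFamily n zeta eta1 p A B τ) (j : Fin 4) :
    ContDiffAt ℂ 2 (regularPotHalf n zeta p A B j) (τ, 0) := by
  have hp := h.contDiffAt_p_fst 0
  have hA := h.contDiffAt_A_fst 0
  have hB := h.contDiffAt_B_fst 0
  have hx : 0 < ((τ, 0) : ℂ × ℂ).1.im := h.im_pos
  have hs : ContDiffAt ℂ 2 (fun y : ℂ × ℂ => -(halfp y.1 j / 2) + y.2) (τ, 0) :=
    (contDiff_halfp_fst j).contDiffAt.neg.add contDiffAt_snd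
  have hadd : ¬ InLattice τ (-(halfp τ j / 2) + 0 + p τ) := by
    rw [add_zero]
    exact h.not_inLattice_half_add j
  have hsub : ¬ InLattice τ (-(halfp τ j / 2) + 0 - p τ) := by
    rw [add_zero]
    exact h.not_inLattice_half_sub j
  have hhalf : ∀ k ∈ Finset.univ.erase j,
      ¬ InLattice τ (-(halfp τ j / 2) + 0 + halfp τ k / 2) := by
    intro k hk
    rw [add_zero]
    exact not_inLattice_halfp_sub h.im_pos (Finset.ne_of_mem_erase hk)
  exact ((((contDiffAt_const.mul (contDiffAt_wp_sub_inv_sq (offPeriods_zero h.im_pos) 2)).add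
    (ContDiffAt.sum fun k hk => contDiffAt_const.mul (contDiffAt_wp_comp (m := 2) hx
      (hs.add (contDiff_halfp_fst k).contDiffAt) (hhalf k hk)))).add
    (contDiffAt_const.mul ((contDiffAt_wp_comp (m := 2) hx (hs.add hp) hadd).add
      (contDiffAt_wp_comp (m := 2) hx (hs.sub hp) hsub)))).add
    (hA.mul ((contDiffAt_zeta_comp (m := 2) h.isZeta hx (hs.add hp) hadd).sub
      (contDiffAt_zeta_comp (m := 2) h.isZeta hx (hs.sub hp) hsub)))).add hB

theorem exists_tendsto_defect_at_half (h : IsLameFamily n zeta eta1 p A B τ) (j : Fin 4) :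
    ∃ L, Tendsto (defect (pot n zeta p A B) (drift zeta eta1 p τ) τ)
      (𝓝[≠] (-(halfp τ j / 2))) (𝓝 L) := by
  have hs : HasDerivAt (fun t => -(halfp t j / 2)) (-(halfpTau j / 2)) τ := by
    simp only [halfp_eq]
    refine ((((hasDerivAt_id' τ).const_mul (halfpTau j : ℂ)).const_add
      (halfpOne j : ℂ)).div_const 2).fun_neg.congr_deriv ?_
    rw [mul_one]
  have hW : AnalyticAt ℂ (fun w => drift zeta eta1 p τ (-(halfp τ j / 2) + w)) 0 := by
    refine AnalyticAt.fun_comp (g := drift zeta eta1 p τ) ?_ (analyticAt_const.add analyticAt_id)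
    refine h.analyticAt_drift ?_ ?_
    · simpa using! h.not_inLattice_half_sub j
    · simpa using! h.not_inLattice_half_add j
  have hodd : ∀ᶠ w in 𝓝 (0 : ℂ),
      drift zeta eta1 p τ (-(halfp τ j / 2) - w) + -(halfpTau j / 2) =
        -(drift zeta eta1 p τ (-(halfp τ j / 2) + w) + -(halfpTau j / 2)) := by
    have hc1 : Continuous fun w => -(halfp τ j / 2) + w - p τ := by fun_prop
    have hc2 : Continuous fun w => -(halfp τ j / 2) + w + p τ := by fun_prop
    have hopen := isOpen_not_inLattice h.im_pos
    have h1 := (hc1.tendsto 0).eventually (hopen.mem_nhds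
      (show ¬ InLattice τ _ by rw [add_zero]; exact h.not_inLattice_half_sub j))
    have h2 := (hc2.tendsto 0).eventually (hopen.mem_nhds
      (show ¬ InLattice τ _ by rw [add_zero]; exact h.not_inLattice_half_add j))
    filter_upwards [h1, h2] with w h1 h2
    have h3 := drift_add_halfp h.isZeta h.isEta1 h.im_pos h1 h2 j
    rw [show -(halfp τ j / 2) - w = -(-(halfp τ j / 2) + w + halfp τ j) by ring,
      drift_neg h.isZeta h.im_pos, h3]
    ring
  obtain ⟨L, hL⟩ := exists_tendsto_defect (s := fun t => -(halfp t j / 2))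
    (h.contDiffAt_regularPotHalf j) hs (pot_at_half j) hW hodd
  exact ⟨L, tendsto_punctured_iff_add.1 hL⟩

theorem tendsto_defect_add (h : IsLameFamily n zeta eta1 p A B τ) {l L : ℂ} (hl : InLattice τ l)
    (hL : Tendsto (defect (pot n zeta p A B) (drift zeta eta1 p τ) τ) (𝓝[≠] z) (𝓝 L)) :
    Tendsto (defect (pot n zeta p A B) (drift zeta eta1 p τ) τ) (𝓝[≠] (z + l)) (𝓝 L) := by
  have h1 := tendsto_add_punctured (z + l) (-l)
  rw [add_neg_cancel_right] at h1
  refine (hL.comp h1).congr' ?_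
  filter_upwards [h.eventually_isRegularPoint_punctured (z + l)] with y hy
  exact h.defect_add_of_inLattice hl.neg hy

theorem tendsto_defect_neg (h : IsLameFamily n zeta eta1 p A B τ) {L : ℂ}
    (hL : Tendsto (defect (pot n zeta p A B) (drift zeta eta1 p τ) τ) (𝓝[≠] z) (𝓝 L)) :
    Tendsto (defect (pot n zeta p A B) (drift zeta eta1 p τ) τ) (𝓝[≠] (-z)) (𝓝 L) := by
  have h1 : Tendsto (fun y : ℂ => -y) (𝓝[≠] (-z)) (𝓝[≠] z) := by
    refine tendsto_nhdsWithin_iff.2 ⟨?_, ?_⟩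
    · have := (continuous_neg.tendsto (-z)).mono_left (nhdsWithin_le_nhds (s := {-z}ᶜ))
      rwa [neg_neg] at this
    · filter_upwards [self_mem_nhdsWithin] with y hy h
      exact hy (neg_eq_iff_eq_neg.1 h)
  exact (hL.comp h1).congr fun y => h.defect_neg y

/-- The defect vanishes at all regular points when the Hamiltonian equations hold at `τ`. -/
theorem defect_eq_zero (h : IsLameFamily n zeta eta1 p A B τ)
    (hp : deriv p τ = (-Complex.I / (4 * (Real.pi : ℂ))) *
      (2 * A τ - zeta τ (2 * p τ) + 2 * p τ * eta1 τ))
    (hA : deriv A τ = (Complex.I / (4 * (Real.pi : ℂ))) *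
      ((2 * wp τ (2 * p τ) + 2 * eta1 τ) * A τ - (3 / 2) * wpd τ (2 * p τ)
        - ∑ k : Fin 4, n k * (n k + 1) * wpd τ (p τ + halfp τ k / 2)))
    (hz : IsRegularPoint p τ z) :
    defect (pot n zeta p A B) (drift zeta eta1 p τ) τ z = 0 := by
  have hlimp : Tendsto (defect (pot n zeta p A B) (drift zeta eta1 p τ) τ) (𝓝[≠] (p τ)) (𝓝 0) := by
    rw [← tendsto_punctured_iff_add]
    obtain ⟨c, hc⟩ : ∃ c, c = -Complex.I / (4 * (Real.pi : ℂ)) := ⟨_, rfl⟩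
    obtain ⟨E, hE, hD⟩ := h.exists_defect_expansion_at_p hc rfl
    rw [← hc] at hp
    rw [show Complex.I / (4 * (Real.pi : ℂ)) = -c by rw [hc]; ring] at hA
    rw [hp, hA] at hE hD
    refine (hE.congr' ?_).trans_eq ?_
    · filter_upwards [hD] with w hw
      rw [hw]
      ring
    · congr 1
      ring
  refine eq_zero_of_doublyPeriodic_of_tendsto h.im_pos ?_ ?_ ?_ hlimp
    (h.differentiableAt_defect hz).continuousAt
  · intro z₀
    exact (h.eventually_isRegularPoint_punctured z₀).mono fun y hy => h.differentiableAt_defect hy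
  · intro z₀
    by_cases h1 : InLattice τ (z₀ - p τ)
    · have := h.tendsto_defect_add h1 hlimp
      rw [add_sub_cancel] at this
      exact ⟨0, this⟩
    by_cases h2 : InLattice τ (z₀ + p τ)
    · have := h.tendsto_defect_add h2 (h.tendsto_defect_neg hlimp)
      rw [neg_add_cancel_comm_assoc] at this
      exact ⟨0, this⟩
    by_cases h3 : ∃ k, InLattice τ (z₀ + halfp τ k / 2)
    · obtain ⟨k, hk⟩ := h3
      obtain ⟨L, hL⟩ := h.exists_tendsto_defect_at_half k
      have := h.tendsto_defect_add hk hL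
      rw [neg_add_cancel_comm_assoc] at this
      exact ⟨L, this⟩
    · have hreg : IsRegularPoint p τ z₀ := ⟨h1, h2, not_exists.1 h3⟩
      exact ⟨_, (h.differentiableAt_defect hreg).continuousAt.tendsto.mono_left nhdsWithin_le_nhds⟩
  · intro l hl z₀
    exact (h.eventually_isRegularPoint_punctured z₀).mono fun y hy =>
      h.defect_add_of_inLattice hl hy

/-- The Hamiltonian equations hold at `τ` when the defect vanishes at all regular points. -/
theorem hamiltonian_of_defect_eq_zero (h : IsLameFamily n zeta eta1 p A B τ)
    (hD₀ : ∀ z, IsRegularPoint p τ z →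
      defect (pot n zeta p A B) (drift zeta eta1 p τ) τ z = 0) :
    deriv p τ = (-Complex.I / (4 * (Real.pi : ℂ))) *
      (2 * A τ - zeta τ (2 * p τ) + 2 * p τ * eta1 τ) ∧
    deriv A τ = (Complex.I / (4 * (Real.pi : ℂ))) *
      ((2 * wp τ (2 * p τ) + 2 * eta1 τ) * A τ - (3 / 2) * wpd τ (2 * p τ)
        - ∑ k : Fin 4, n k * (n k + 1) * wpd τ (p τ + halfp τ k / 2)) := by
  obtain ⟨c, hc⟩ : ∃ c, c = -Complex.I / (4 * (Real.pi : ℂ)) := ⟨_, rfl⟩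
  obtain ⟨E, hE, hD⟩ := h.exists_defect_expansion_at_p hc rfl
  have hreg : ∀ᶠ w in 𝓝[≠] (0 : ℂ), IsRegularPoint p τ (p τ + w) := by
    have h1 := tendsto_add_punctured 0 (p τ)
    rw [zero_add] at h1
    refine (h1.eventually (h.eventually_isRegularPoint_punctured (p τ))).mono fun w hw => ?_
    rwa [add_comm]
  obtain ⟨h3, -, h1⟩ := polar_coefficients_eq_zero hE (by
    filter_upwards [hD, hreg] with w hw hr
    rw [← hw, hD₀ _ hr])
  rw [show Complex.I / (4 * (Real.pi : ℂ)) = -c by rw [hc]; ring, ← hc]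
  constructor
  · linear_combination h3 / 3
  · linear_combination -h1 / 2

end IsLameFamily

end

/-- Theorem 2.9, analytic core: `U ≡ 0` away from the singular set if and
only if `(p, A)` satisfies the Hamiltonian system. -/
theorem U_vanishes_iff_hamiltonian
    (n : Fin 4 → ℂ) (zeta : ℂ → ℂ → ℂ) (eta1 : ℂ → ℂ)
    (hzeta : IsWeierstrassZeta zeta) (heta1 : IsEta1 zeta eta1)
    (V : Set ℂ) (hVopen : IsOpen V) (hVconn : IsConnected V)
    (hVH : ∀ τ ∈ V, 0 < τ.im)
    (p A : ℂ → ℂ)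
    (hpdiff : DifferentiableOn ℂ p V) (hAdiff : DifferentiableOn ℂ A V)
    (hreg : ∀ τ ∈ V, ¬ InLattice τ (2 * p τ) ∧
      ∀ k : Fin 4, ¬ InLattice τ (p τ + halfp τ k / 2))
    (B : ℂ → ℂ)
    (hB : ∀ τ, B τ = A τ ^ 2 - zeta τ (2 * p τ) * A τ - (3 / 4) * wp τ (2 * p τ)
      - ∑ k : Fin 4, n k * (n k + 1) * wp τ (p τ + halfp τ k / 2))
    (Ω : ℂ → ℂ → ℂ)
    (hΩ : ∀ τ z, Ω τ z = (-Complex.I / (4 * (Real.pi : ℂ))) *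
      (zeta τ (z - p τ) + zeta τ (z + p τ) - 2 * z * eta1 τ))
    (U : ℂ → ℂ → ℂ)
    (hU : ∀ τ z, U τ z = deriv (deriv (deriv (Ω τ))) z
      - 4 * Ipot n zeta (A τ) (B τ) (p τ) τ z * deriv (Ω τ) z
      - 2 * deriv (fun w => Ipot n zeta (A τ) (B τ) (p τ) τ w) z * Ω τ z
      + 2 * deriv (fun t => Ipot n zeta (A t) (B t) (p t) t z) τ) :
    (∀ τ ∈ V, ∀ z : ℂ, ¬ InLattice τ (z - p τ) → ¬ InLattice τ (z + p τ) →
      (∀ k : Fin 4, ¬ InLattice τ (z + halfp τ k / 2)) → U τ z = 0)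
    ↔ HamSystem n zeta eta1 V p A := by
  obtain rfl : Ω = drift zeta eta1 p := by
    funext τ z
    exact hΩ τ z
  have hUdef : ∀ τ z, U τ z = defect (pot n zeta p A B) (drift zeta eta1 p τ) τ z := hU
  have hfam : ∀ τ ∈ V, IsLameFamily n zeta eta1 p A B τ := fun τ hτ =>
    { isZeta := hzeta
      isEta1 := heta1
      im_pos := hVH τ hτ
      analytic_p := hpdiff.analyticAt (hVopen.mem_nhds hτ)
      analytic_A := hAdiff.analyticAt (hVopen.mem_nhds hτ)
      two_mul := (hreg τ hτ).1
      half := (hreg τ hτ).2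
      B_eq := hB }
  constructor
  · intro hzero τ hτ
    have h := hfam τ hτ
    obtain ⟨hp, hA⟩ := h.hamiltonian_of_defect_eq_zero fun z hz => by
      rw [← hUdef]
      exact hzero τ hτ z hz.sub hz.add hz.half
    exact ⟨h.analytic_p.differentiableAt.hasDerivAt.congr_deriv hp,
      h.analytic_A.differentiableAt.hasDerivAt.congr_deriv hA⟩
  · intro hham τ hτ z h1 h2 h3
    obtain ⟨hp, hA⟩ := hham τ hτ
    rw [hUdef]
    exact (hfam τ hτ).defect_eq_zero hp.deriv hA.deriv ⟨h1, h2, h3⟩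
end

section
/- Fix τ ∈ ℍ, n₀,n₁,n₂,n₃, A ∈ ℂ and p ∈ ℂ with 2p ∉ Λ_τ and p + ω_k/2 ∉ Λ_τ for all k, and let B = A² − ζ(2p|τ)A − (3/4)℘(2p|τ) − Σ_k n_k(n_k+1)℘(p + ω_k/2|τ). Then the Laurent expansion of the generalized Lamé potential I at z = p in the variable u = z − p is I(z;τ) = (3/4)u⁻² − Au⁻¹ + A² + H₁u + H₂u² + O(u³), where H₁ = Σ_{k=0}^{3} n_k(n_k+1)℘′(p + ω_k/2|τ) + (3/4)℘′(2p|τ) − A℘(2p|τ) and H₂ = (1/2)[Σ_{k=0}^{3} n_k(n_k+1)℘″(p + ω_k/2|τ) + (3/4)℘″(2p|τ) + (3/40)g₂(τ) − A℘′(2p|τ)]. -/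
open Complex Filter Topology Asymptotics

/-- Second-order Taylor expansion of an analytic function. -/
lemma AnalyticAt.isBigO_sub_taylor_two {f : ℂ → ℂ} {x : ℂ} (hf : AnalyticAt ℂ f x) :
    (fun u : ℂ => f (x + u) - (f x + deriv f x * u + deriv (deriv f) x / 2 * u ^ 2))
      =O[𝓝 (0 : ℂ)] fun u => u ^ 3 := by
  have h := (hf.hasFPowerSeriesAt.isBigO_sub_partialSum_pow 3).trans
    (isBigO_of_le (g := fun u : ℂ => u ^ 3) _ fun u => by simp)
  refine h.congr_left fun u => ?_
  simp [FormalMultilinearSeries.partialSum, Finset.sum_range_succ, iteratedDeriv_succ]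
  ring

namespace PeriodPair

variable (L : PeriodPair)

lemma weierstrassP_eq_inv_sq_add (z : ℂ) : ℘[L] z = z⁻¹ ^ 2 + ℘[L - (0 : ℂ)] z := by
  have h := L.weierstrassPExcept_add 0 z
  simp at h
  rw [← h]
  simp [add_comm]

lemma deriv_weierstrassPExcept_zero : deriv ℘[L - (0 : ℂ)] 0 = 0 := by
  simp

lemma deriv_deriv_weierstrassPExcept_zero :
    deriv (deriv ℘[L - (0 : ℂ)]) 0 = L.g₂ / 10 := by
  have h := L.iteratedDeriv_weierstrassPExcept_self 0 (n := 2)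
  simp [iteratedDeriv_succ] at h
  rw [h, g₂]
  norm_num [Nat.factorial]
  ring

/-- `℘(u) = u⁻² + (g₂/20) u² + O(u³)`. -/
lemma isBigO_weierstrassP_sub_laurent :
    (fun u : ℂ => ℘[L] u - (u⁻¹ ^ 2 + L.g₂ / 20 * u ^ 2)) =O[𝓝 (0 : ℂ)] fun u => u ^ 3 := by
  refine (L.analyticAt_weierstrassPExcept 0).isBigO_sub_taylor_two.congr_left fun u => ?_
  rw [L.weierstrassP_eq_inv_sq_add, deriv_weierstrassPExcept_zero,
    deriv_deriv_weierstrassPExcept_zero]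
  simp only [weierstrassPExcept_zero, zero_add]
  ring

lemma tendsto_weierstrassP_cobounded :
    Tendsto ℘[L] (𝓝[≠] 0) (Bornology.cobounded ℂ) := by
  rw [tendsto_cobounded_iff_meromorphicOrderAt_neg (L.meromorphic_weierstrassP 0),
    L.order_weierstrassP 0 (zero_mem _)]
  decide

lemma not_eventually_weierstrassP_eq {w : ℂ} (hw : w ∉ L.lattice) (c : ℂ) :
    ¬ ∀ᶠ z in 𝓝 w, ℘[L] z = c := by
  intro h
  have hconn : IsPreconnected ((L.lattice : Set ℂ)ᶜ) :=
    (Set.Countable.isConnected_compl_of_one_lt_rank (by simp)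
      (Set.countable_coe_iff.mp (inferInstanceAs (Countable L.lattice)))).isPreconnected
  have heq := L.analyticOnNhd_weierstrassP.eqOn_of_preconnected_of_eventuallyEq
    (analyticOnNhd_const (v := c)) hconn hw h
  have h0 : ∀ᶠ z in 𝓝[≠] (0 : ℂ), ℘[L] z = c := by
    filter_upwards [self_mem_nhdsWithin, mem_nhdsWithin_of_mem_nhds
      (L.compl_lattice_sdiff_singleton_mem_nhds 0)] with z hz hz'
    exact heq (by simp_all)
  have h1 : ∀ᶠ z in 𝓝[≠] (0 : ℂ), ℘[L] z ≠ c :=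
    L.tendsto_weierstrassP_cobounded.eventually
      (Bornology.isBounded_singleton (x := c))
  obtain ⟨z, hz, hz'⟩ := (h0.and h1).exists
  exact hz' hz

lemma derivWeierstrassP_eq_zero_of_two_mul_mem {w : ℂ} (h : 2 * w ∈ L.lattice) :
    ℘'[L] w = 0 := by
  have h1 := L.derivWeierstrassP_add_coe (-w) ⟨2 * w, h⟩
  rw [L.derivWeierstrassP_neg, show -w + 2 * w = w by ring] at h1
  linear_combination h1 / 2

/-- `(℘(z) - ℘(w)) (℘(z + w) - ℘(w))` is constant for a half-period `w`. -/
lemma weierstrassP_sub_mul_eq_const {w : ℂ} (hw : w ∉ L.lattice) (h2w : 2 * w ∈ L.lattice) :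
    ∃ c, ∀ z, z ∉ L.lattice → z + w ∉ L.lattice →
      (℘[L] z - ℘[L] w) * (℘[L] (z + w) - ℘[L] w) = c := by
  classical
  have hPw : AnalyticAt ℂ ℘[L] w := L.analyticOnNhd_weierstrassP w hw
  have hh : AnalyticAt ℂ (fun z => ℘[L] (z + w) - ℘[L] w) 0 := by
    have : AnalyticAt ℂ (fun z => ℘[L] (z + w)) 0 :=
      AnalyticAt.fun_comp (g := ℘[L]) (by simpa using hPw) (by fun_prop)
    fun_prop
  have hord : ((2 : ℕ) : ℕ∞) ≤ analyticOrderAt (fun z => ℘[L] (z + w) - ℘[L] w) 0 := by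
    rw [natCast_le_analyticOrderAt_iff_iteratedDeriv_eq_zero hh]
    intro i hi
    interval_cases i
    · simp
    · simp [iteratedDeriv_succ, deriv_comp_add_const,
        L.derivWeierstrassP_eq_zero_of_two_mul_mem h2w]
  obtain ⟨g, hg, hgeq⟩ := (natCast_le_analyticOrderAt hh).mp hord
  set M : Set ℂ := {z | z ∈ L.lattice ∨ z + w ∈ L.lattice} with hM
  have hMclosed : IsClosed M :=
    L.isClosed_lattice.union (L.isClosed_lattice.preimage (continuous_add_const w))
  set F : ℂ → ℂ := fun z => if z ∈ M then g 0 else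
    (℘[L] z - ℘[L] w) * (℘[L] (z + w) - ℘[L] w) with hF
  have hP2w (z : ℂ) : ℘[L] (z + w + w) = ℘[L] z := by
    rw [add_assoc, ← two_mul]; exact L.weierstrassP_add_coe z ⟨_, h2w⟩
  have hmem (z l : ℂ) (hl : l ∈ L.lattice) : z + l ∈ L.lattice ↔ z ∈ L.lattice :=
    add_mem_cancel_right hl
  have hper (z l : ℂ) (hl : l ∈ L.lattice) : F (z + l) = F z := by
    have h1 : ℘[L] (z + l) = ℘[L] z := L.weierstrassP_add_coe z ⟨l, hl⟩
    have h2 : ℘[L] (z + w + l) = ℘[L] (z + w) := L.weierstrassP_add_coe _ ⟨l, hl⟩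
    simp only [hF, hM, Set.mem_ofPred_eq, h1, h2, add_right_comm z l w, hmem _ _ hl]
  have hperw (z : ℂ) : F (z + w) = F z := by
    have h1 : z + w + w ∈ L.lattice ↔ z ∈ L.lattice := by
      rw [add_assoc, ← two_mul]; exact hmem _ _ h2w
    simp only [hF, hM, Set.mem_ofPred_eq, h1, hP2w, or_comm, mul_comm]
  have hF0 : AnalyticAt ℂ F 0 := by
    have : AnalyticAt ℂ (fun z => (1 + z ^ 2 * (℘[L - (0 : ℂ)] z - ℘[L] w)) * g z) 0 := by
      fun_prop
    refine this.congr ?_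
    have hwn : ∀ᶠ z in 𝓝 (0 : ℂ), z + w ∉ L.lattice :=
      (continuous_add_const w).continuousAt.eventually
        (L.isClosed_lattice.isOpen_compl.mem_nhds (by simpa using hw))
    filter_upwards [hgeq, hwn, L.compl_lattice_sdiff_singleton_mem_nhds 0] with z hz hzw hz0
    by_cases hzz : z = 0
    · simp [hF, hM, hzz]
    · have hzL : z ∉ L.lattice := by simp_all
      have hzM : z ∉ M := by simp [hM, hzL, hzw]
      simp only [hF, if_neg hzM, hz, L.weierstrassP_eq_inv_sq_add z, smul_eq_mul, sub_zero]
      field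
  have htrans {x : ℂ} (hx : AnalyticAt ℂ F x) (y : ℂ) (hy : ∀ z, F (z + y) = F z) :
      AnalyticAt ℂ F (x - y) := by
    have : AnalyticAt ℂ (fun z => F (z + y)) (x - y) :=
      AnalyticAt.fun_comp (g := F) (by simpa using hx) (by fun_prop)
    simpa only [hy] using this
  have hFan (x : ℂ) : AnalyticAt ℂ F x := by
    by_cases hx : x ∈ M
    · rcases hx with hx | hx
      · simpa using htrans hF0 (-x) fun z => hper z (-x) (neg_mem hx)
      · have := htrans (htrans hF0 (-(x + w)) fun z => hper z _ (neg_mem hx)) w hperw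
        simpa using this
    · have hx' : x ∉ L.lattice ∧ x + w ∉ L.lattice := by simpa [hM, not_or] using hx
      have h1 := L.analyticOnNhd_weierstrassP x hx'.1
      have h2 : AnalyticAt ℂ (fun z => ℘[L] (z + w)) x :=
        AnalyticAt.fun_comp (g := ℘[L]) (L.analyticOnNhd_weierstrassP _ hx'.2) (by fun_prop)
      have h3 : AnalyticAt ℂ (fun z => (℘[L] z - ℘[L] w) * (℘[L] (z + w) - ℘[L] w)) x := by
        fun_prop
      refine h3.congr ?_
      filter_upwards [hMclosed.isOpen_compl.mem_nhds hx] with z hz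
      simp only [hF, if_neg hz]
  have hdiff : Differentiable ℂ F := fun x => (hFan x).differentiableAt
  refine ⟨F 0, fun z hz hzw => ?_⟩
  have h := hdiff.apply_eq_apply_of_bounded (IsZLattice.isCompact_range_of_periodic L.lattice F
    hdiff.continuous hper).isBounded z 0
  rw [← h]
  simp [hF, hM, hz, hzw]

/-- `℘` takes distinct values at half-periods that are incongruent modulo the lattice. -/
lemma weierstrassP_ne_of_two_mul_mem {w v : ℂ} (hw : w ∉ L.lattice) (hv : v ∉ L.lattice)
    (h2w : 2 * w ∈ L.lattice) (hvw : v + w ∉ L.lattice) : ℘[L] v ≠ ℘[L] w := by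
  intro heq
  obtain ⟨c, hc⟩ := L.weierstrassP_sub_mul_eq_const hw h2w
  obtain rfl : c = 0 := by rw [← hc v hv hvw, heq]; simp
  have hwn : ∀ᶠ z in 𝓝 (0 : ℂ), z + w ∉ L.lattice :=
    (continuous_add_const w).continuousAt.eventually
      (L.isClosed_lattice.isOpen_compl.mem_nhds (by simpa using hw))
  have h0 : ∀ᶠ z in 𝓝[≠] (0 : ℂ), ℘[L] (z + w) = ℘[L] w := by
    filter_upwards [self_mem_nhdsWithin, mem_nhdsWithin_of_mem_nhds hwn,
      mem_nhdsWithin_of_mem_nhds (L.compl_lattice_sdiff_singleton_mem_nhds 0),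
      L.tendsto_weierstrassP_cobounded.eventually
        (Bornology.isBounded_singleton (x := ℘[L] w))] with z hz hzw hz0 hne
    have hzL : z ∉ L.lattice := by simp_all
    exact sub_eq_zero.mp ((mul_eq_zero.mp (hc z hzL hzw)).resolve_left (sub_ne_zero.mpr hne))
  refine L.not_eventually_weierstrassP_eq hw (℘[L] w) ?_
  have h1 : ∀ᶠ z in 𝓝 (0 : ℂ), ℘[L] (z + w) = ℘[L] w := by
    rw [eventually_nhdsWithin_iff] at h0
    filter_upwards [h0] with z hz
    by_cases hzz : z = 0
    · simp [hzz]
    · exact hz hzz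
  have h2 : Tendsto (fun z => z - w) (𝓝 w) (𝓝 0) := by
    simpa using (continuous_sub_right w).tendsto w
  simpa using h2.eventually h1

/-- `g₂ = -4 (e₁ e₂ + e₁ e₃ + e₂ e₃)` for the values `eᵢ` of `℘` at the half-periods. -/
lemma g₂_eq_of_half_periods {a b : ℂ} (ha : a ∉ L.lattice) (hb : b ∉ L.lattice)
    (hab : a + b ∉ L.lattice) (h2a : 2 * a ∈ L.lattice) (h2b : 2 * b ∈ L.lattice) :
    L.g₂ = -4 * (℘[L] a * ℘[L] b + ℘[L] a * ℘[L] (a + b) + ℘[L] b * ℘[L] (a + b)) := by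
  have h2ab : 2 * (a + b) ∈ L.lattice := by rw [mul_add]; exact add_mem h2a h2b
  have root (w : ℂ) (hw : w ∉ L.lattice) (h2 : 2 * w ∈ L.lattice) :
      4 * ℘[L] w ^ 3 - L.g₂ * ℘[L] w - L.g₃ = 0 := by
    rw [← L.derivWeierstrassP_sq w hw, L.derivWeierstrassP_eq_zero_of_two_mul_mem h2]; simp
  have hxy : ℘[L] a ≠ ℘[L] b :=
    L.weierstrassP_ne_of_two_mul_mem hb ha h2b hab
  have hzx : ℘[L] (a + b) ≠ ℘[L] a := by
    refine L.weierstrassP_ne_of_two_mul_mem ha hab h2a fun h => hb ?_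
    have := sub_mem h h2a
    ring_nf at this
    exact this
  have hzy : ℘[L] (a + b) ≠ ℘[L] b := by
    refine L.weierstrassP_ne_of_two_mul_mem hb hab h2b fun h => ha ?_
    have := sub_mem h h2b
    ring_nf at this
    exact this
  have h1 := root a ha h2a
  have h2 := root b hb h2b
  have h3 := root (a + b) hab h2ab
  generalize ℘[L] a = x at *
  generalize ℘[L] b = y at *
  generalize ℘[L] (a + b) = z at *
  have k1 : 4 * (x ^ 2 + x * y + y ^ 2) - L.g₂ = 0 :=
    mul_left_cancel₀ (sub_ne_zero.mpr hxy) (by linear_combination h1 - h2)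
  have k2 : 4 * (x ^ 2 + x * z + z ^ 2) - L.g₂ = 0 :=
    mul_left_cancel₀ (sub_ne_zero.mpr hzx) (by linear_combination h3 - h1)
  have k3 : x + y + z = 0 :=
    mul_left_cancel₀ (sub_ne_zero.mpr hzy) (by linear_combination (k2 - k1) / 4)
  linear_combination -k1 + 4 * (x + y) * k3

/-- An antiderivative `f` of `-℘` with `f(u) - 1/u → 0` satisfies `f(u) = u⁻¹ + O(u³)`. -/
lemma isBigO_sub_inv_of_hasDerivAt {f : ℂ → ℂ}
    (hf : ∀ z ∉ L.lattice, HasDerivAt f (-℘[L] z) z)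
    (hf0 : Tendsto (fun z => f z - z⁻¹) (𝓝[≠] 0) (𝓝 0)) :
    (fun u : ℂ => f u - u⁻¹) =O[𝓝[≠] (0 : ℂ)] fun u => u ^ 3 := by
  set d : ℂ → ℂ := Function.update (fun z => f z - z⁻¹) 0 0 with hd
  have hderiv : ∀ᶠ z in 𝓝[≠] (0 : ℂ), HasDerivAt d (-℘[L - (0 : ℂ)] z) z := by
    filter_upwards [self_mem_nhdsWithin, mem_nhdsWithin_of_mem_nhds
      (L.compl_lattice_sdiff_singleton_mem_nhds 0)] with z hz hz'
    have hz0 : z ≠ 0 := hz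
    have hzL : z ∉ L.lattice := by simp_all
    have h := (hf z hzL).sub (hasDerivAt_inv hz0)
    have h' : -℘[L] z - -(z ^ 2)⁻¹ = -℘[L - (0 : ℂ)] z := by
      rw [L.weierstrassP_eq_inv_sq_add]; simp
    rw [h'] at h
    refine h.congr_of_eventuallyEq ?_
    filter_upwards [isOpen_ne.mem_nhds hz0] with y hy
    simp [hd, Function.update_of_ne hy]
  have hcont : ContinuousAt d 0 := continuousAt_update_same.mpr hf0
  have hdan : AnalyticAt ℂ d 0 :=
    analyticAt_of_differentiable_on_punctured_nhds_of_continuousAt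
      (hderiv.mono fun z hz => hz.differentiableAt) hcont
  have hderiv' : deriv d =ᶠ[𝓝 0] fun z => -℘[L - (0 : ℂ)] z :=
    (hdan.deriv.continuousAt.eventuallyEq_nhds_iff_eventuallyEq_nhdsNE
      (L.analyticAt_weierstrassPExcept 0).continuousAt.neg).mp
        (hderiv.mono fun z hz => hz.deriv)
  have h1 : deriv d 0 = 0 := by simpa using hderiv'.eq_of_nhds
  have h2 : deriv (deriv d) 0 = 0 := by
    rw [hderiv'.deriv_eq]; simp
  have hd0 : d 0 = 0 := by simp [hd]
  refine (hdan.isBigO_sub_taylor_two.mono nhdsWithin_le_nhds).congr' ?_ EventuallyEq.rfl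
  filter_upwards [self_mem_nhdsWithin] with u hu
  rw [h1, h2, hd0]
  simp [hd, Function.update_of_ne hu]

/-- The second-order Taylor expansion at a non-lattice point of an antiderivative of `-℘`. -/
lemma isBigO_sub_taylor_two_of_hasDerivAt {f : ℂ → ℂ}
    (hf : ∀ z ∉ L.lattice, HasDerivAt f (-℘[L] z) z) {x : ℂ} (hx : x ∉ L.lattice) :
    (fun u : ℂ => f (x + u) - (f x - ℘[L] x * u - ℘'[L] x / 2 * u ^ 2))
      =O[𝓝 (0 : ℂ)] fun u => u ^ 3 := by
  have hopen := L.isClosed_lattice.isOpen_compl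
  have han : AnalyticAt ℂ f x :=
    DifferentiableOn.analyticAt (s := (L.lattice : Set ℂ)ᶜ)
      (fun z hz => (hf z hz).differentiableAt.differentiableWithinAt) (hopen.mem_nhds hx)
  have hderiv : deriv f =ᶠ[𝓝 x] fun z => -℘[L] z := by
    filter_upwards [hopen.mem_nhds hx] with z hz using (hf z hz).deriv
  refine han.isBigO_sub_taylor_two.congr_left fun u => ?_
  rw [hderiv.deriv_eq, hderiv.eq_of_nhds, deriv.fun_neg, deriv_weierstrassP]
  ring

end PeriodPair

/-- The period pair `(1, τ)`. -/
def PeriodPair.ofUpperHalfPlane (τ : ℂ) (hτ : 0 < τ.im) : PeriodPair where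
  ω₁ := 1
  ω₂ := τ
  indep := by
    rw [LinearIndependent.pair_iff]
    intro s t h
    have him := congrArg Complex.im h
    have hre := congrArg Complex.re h
    simp at him hre
    have ht : t = 0 := him.resolve_right hτ.ne'
    exact ⟨by simpa [ht] using hre, ht⟩

section UpperHalfPlane

open PeriodPair

variable {τ : ℂ} (hτ : 0 < τ.im)

lemma mem_lattice_ofUpperHalfPlane {z : ℂ} :
    z ∈ (ofUpperHalfPlane τ hτ).lattice ↔ InLattice τ z := by
  simp [mem_lattice, InLattice, ofUpperHalfPlane, eq_comm]

lemma wp_eq_weierstrassP_s12 : wp τ = ℘[ofUpperHalfPlane τ hτ] := by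
  ext z
  rw [weierstrassP_eq_inv_sq_add, wp, weierstrassPExcept]
  congr 1
  set L := ofUpperHalfPlane τ hτ with hL
  rw [← L.latticeEquivProd.symm.toEquiv.tsum_eq, ← tsum_subtype_eq_of_support_subset
    (s := {w : ℤ × ℤ | w ≠ 0})]
  · refine tsum_congr fun w => ?_
    have hw : w.1 ≠ 0 := w.2
    have hw' : ((L.latticeEquivProd.symm w.1 : L.lattice) : ℂ) ≠ 0 := by simpa using hw
    have he : ((L.latticeEquivProd.symm w.1 : L.lattice) : ℂ) = w.1.1 + w.1.2 * τ := by
      rw [L.latticeEquiv_symm_apply]; simp [hL, ofUpperHalfPlane]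
    rw [he] at hw'
    simp [he, hw']
  · intro w hw h0
    simp [h0] at hw

lemma wpd_eq_derivWeierstrassP : wpd τ = ℘'[ofUpperHalfPlane τ hτ] := by
  ext z
  rw [wpd, wp_eq_weierstrassP_s12 hτ, deriv_weierstrassP]

lemma ratCast_add_ratCast_mul_notMem_lattice {r s : ℚ} (h : r.den ≠ 1 ∨ s.den ≠ 1) :
    (r : ℂ) + s * τ ∉ (ofUpperHalfPlane τ hτ).lattice := by
  have := mul_ω₁_add_mul_ω₂_mem_lattice (L := ofUpperHalfPlane τ hτ) (α := r) (β := s)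
  simp only [ofUpperHalfPlane, mul_one] at this ⊢
  rw [this]
  tauto

lemma g2_eq_g₂ : g2 τ = (ofUpperHalfPlane τ hτ).g₂ := by
  have h12 : ((1 / 2 : ℚ)).den ≠ 1 := by norm_num
  have ha := ratCast_add_ratCast_mul_notMem_lattice hτ (r := 1 / 2) (s := 0) (Or.inl h12)
  have hb := ratCast_add_ratCast_mul_notMem_lattice hτ (r := 0) (s := 1 / 2) (Or.inr h12)
  have hab := ratCast_add_ratCast_mul_notMem_lattice hτ (r := 1 / 2) (s := 1 / 2) (Or.inl h12)
  have hab' : (1 / 2 : ℂ) + τ / 2 = (1 + τ) / 2 := by ring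
  rw [g₂_eq_of_half_periods (a := 1 / 2) (b := τ / 2), g2, e1, e2, e3, wp_eq_weierstrassP_s12 hτ, hab']
  · simpa using ha
  · simpa [div_eq_inv_mul] using hb
  · simpa [div_eq_inv_mul] using hab
  · rw [mem_lattice_ofUpperHalfPlane]; exact ⟨1, 0, by simp⟩
  · rw [mem_lattice_ofUpperHalfPlane]; exact ⟨0, 1, by simp; ring⟩

/-- Second-order Taylor expansion of `℘(·|τ)` off the lattice. -/
lemma isBigO_wp_sub_taylor_two (hτ : 0 < τ.im) {x : ℂ} (hx : ¬ InLattice τ x) :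
    (fun u : ℂ => wp τ (x + u) - (wp τ x + wpd τ x * u + wpdd τ x / 2 * u ^ 2))
      =O[𝓝 (0 : ℂ)] fun u => u ^ 3 := by
  have han : AnalyticAt ℂ (wp τ) x := by
    rw [wp_eq_weierstrassP_s12 hτ]
    exact analyticOnNhd_weierstrassP _ x (by simpa [mem_lattice_ofUpperHalfPlane hτ] using hx)
  exact han.isBigO_sub_taylor_two

end UpperHalfPlane

open PeriodPair in
/-- Lemma 2.10 (i): the Laurent expansion of the generalized Lamé
potential `I` at `z = p` in the variable `u = z - p`:
`I(p+u;τ) = (3/4)u⁻² - Au⁻¹ + A² + H₁u + H₂u² + O(u³)`. -/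
theorem Ipot_expansion_at_p
    (τ : ℂ) (hτ : 0 < τ.im) (n : Fin 4 → ℂ) (A p : ℂ)
    (zeta : ℂ → ℂ → ℂ) (hzeta : IsWeierstrassZeta zeta)
    (hp2 : ¬ InLattice τ (2 * p))
    (hpk : ∀ k : Fin 4, ¬ InLattice τ (p + halfp τ k / 2))
    (B : ℂ)
    (hB : B = A ^ 2 - zeta τ (2 * p) * A - (3 / 4) * wp τ (2 * p)
      - ∑ k : Fin 4, n k * (n k + 1) * wp τ (p + halfp τ k / 2))
    (H1 H2 : ℂ)
    (hH1 : H1 = (∑ k : Fin 4, n k * (n k + 1) * wpd τ (p + halfp τ k / 2))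
      + (3 / 4) * wpd τ (2 * p) - A * wp τ (2 * p))
    (hH2 : H2 = (1 / 2) * ((∑ k : Fin 4, n k * (n k + 1) * wpdd τ (p + halfp τ k / 2))
      + (3 / 4) * wpdd τ (2 * p) + (3 / 40) * g2 τ - A * wpd τ (2 * p))) :
    (fun u : ℂ => Ipot n zeta A B p τ (p + u)
        - ((3 / 4) * u⁻¹ ^ 2 - A * u⁻¹ + A ^ 2 + H1 * u + H2 * u ^ 2))
      =O[𝓝[≠] (0 : ℂ)] fun u => u ^ 3 := by
  set L := PeriodPair.ofUpperHalfPlane τ hτ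
  obtain ⟨-, hz, hz0⟩ := hzeta τ hτ
  have hz' : ∀ z ∉ L.lattice, HasDerivAt (zeta τ) (-℘[L] z) z := fun z hzL => by
    rw [← wp_eq_weierstrassP_s12 hτ]
    exact hz z (by rwa [← mem_lattice_ofUpperHalfPlane hτ])
  have hp2' : 2 * p ∉ L.lattice := by rwa [mem_lattice_ofUpperHalfPlane]
  have hsum : (fun u : ℂ => ∑ k : Fin 4, n k * (n k + 1) * (wp τ (p + halfp τ k / 2 + u)
      - (wp τ (p + halfp τ k / 2) + wpd τ (p + halfp τ k / 2) * u
        + wpdd τ (p + halfp τ k / 2) / 2 * u ^ 2))) =O[𝓝[≠] (0 : ℂ)] fun u => u ^ 3 :=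
    IsBigO.fun_sum fun k _ =>
      ((isBigO_wp_sub_taylor_two hτ (hpk k)).mono nhdsWithin_le_nhds).const_mul_left _
  have hwp2 := ((isBigO_wp_sub_taylor_two hτ hp2).mono
    (nhdsWithin_le_nhds (s := {0}ᶜ))).const_mul_left (3 / 4)
  have hwp0 := (L.isBigO_weierstrassP_sub_laurent.mono
    (nhdsWithin_le_nhds (s := {0}ᶜ))).const_mul_left (3 / 4)
  have hzeta2 := ((L.isBigO_sub_taylor_two_of_hasDerivAt hz' hp2').mono
    (nhdsWithin_le_nhds (s := {0}ᶜ))).const_mul_left A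
  have hzeta0 := (L.isBigO_sub_inv_of_hasDerivAt hz' hz0).const_mul_left A
  rw [← wp_eq_weierstrassP_s12 hτ, ← g2_eq_g₂ hτ] at hwp0
  rw [← wp_eq_weierstrassP_s12 hτ, ← wpd_eq_derivWeierstrassP hτ] at hzeta2
  refine ((((hsum.add hwp2).add hwp0).add hzeta2).sub hzeta0).congr_left fun u => ?_
  rw [Ipot, hB, hH1, hH2, show p + u + p = 2 * p + u by ring, show p + u - p = u by ring]
  simp only [Fin.sum_univ_four, add_right_comm p u]
  ring
end
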